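/- Suppose that for each A > 0 a number B(A) > 0 and a map φ_A are given such that φ_A is a continuous map from the closure of Q to the closure of Ω_{B(A)} restricting to a holomorphic bijection from Q onto Ω_{B(A)}, with φ_A(z)/z → 1 as |z| → ∞ in Q, φ_A(0) = i·B(A), and φ_A(A) = 0. Then B(A) = A + (1/2)·log A + (1/2)·log(2π) + o(1) as A → +∞. -/

import Mathlib

/-!
The proof turns `B(A)` into an integral of `cos φ_A` along a fixed contour, and evaluates the limit
of that integral.

*Boundary correspondence.* The boundary values of `φ = φ_A` lie on `∂Ω_B`; on the curved arc
`Re w = arccos (cosh B / cosh (Im w))`, so that `Re cos w = cosh B` there. A holomorphic function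
with nonnegative imaginary part above a real interval, and real on it, increases along the interval
(`mono_of_im_nonneg`, through Schwarz reflection). Applied to suitable functions of `φ`, this shows
that `[0, A]` goes to the vertical segment, `[A, ∞)` to the real axis, and the imaginary axis to the
curved arc (`im_le_B`, `re_eq_zero`, `im_eq_zero`, `B_le_im`).

*The deviation.* Put `z = A √(ξ² + 1)` and `dev ξ = φ z - A ξ`. The function `dev` is real on the
positive axis, grows sublinearly, and its real part is `0` on `(0, i)` and between `0` and `π / 2` on
`(i, i∞)`. The Phragmén–Lindelöf principle (`QuadData.re_nonpos`) gives `0 ≤ Re dev ≤ π / 2`, the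
upper barrier `Re arctan ξ` and a lower barrier of the same kind; with Harnack's inequality
(`harnack_rhp`) these yield a bound on `exp (-i dev)` uniform in `A` (`exp_dev_im_le`), and
`dev → arctan` as soon as `B(A) ≤ (1 + o(1)) A` (`tendsto_dev`).

*The contour identity.* With `ξ = √(s² - 1)`, the function `cos (φ (A s)) · exp (i A ξ) · (1 - s⁴)` is
real on `[0, 1]` and has real part `cosh B · exp (-A √(1 + y²)) (1 - y⁴)` at `s = i y`, `0 ≤ y ≤ 1`.
Cauchy's theorem on the unit square expresses `cosh B · J(A)`, where
`J(A) = ∫₀¹ exp (-A √(1 + y²)) (1 - y⁴) dy`, through the right and top sides (`contour_identity`).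
There the function is bounded uniformly in `A` (`contourFn_bound`). Laplace's method gives
`√A e^A J(A) → √(π / 2)` (`leftInt_tendsto`), so the uniform bound already implies
`B(A) ≤ (1 + o(1)) A` (`B_le_eventually`). Hence the function converges to
`exp (-i arctan ξ) (1 - s⁴) / 2`, an algebraic function whose contribution is `π / 2`
(`sides_limitFn`). Therefore `cosh B(A) ∼ √(π / 2) √A e^A`, and taking logarithms gives the claim.
-/

open Filter Set

/-- The open first quadrant. -/
def Q : Set ℂ := {z | 0 < z.re ∧ 0 < z.im}

/-- The boundary function of the region `Ω_B`. -/
noncomputable def gB (B y : ℝ) : ℝ :=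
  if y ≤ B then 0 else Real.arccos (Real.cosh B / Real.cosh y)

/-- The region `Ω_B`. -/
noncomputable def ΩB (B : ℝ) : Set ℂ := {z | 0 < z.im ∧ gB B z.im < z.re}

open Topology

/-! ### Schwarz reflection and boundary monotonicity -/

/-- The extension of `F` from the closed upper half-plane by Schwarz reflection:
`z ↦ conj (F (conj z))` below the real axis. -/
noncomputable def reflectC (F : ℂ → ℂ) (z : ℂ) : ℂ :=
  if 0 ≤ z.im then F z else (starRingEnd ℂ) (F ((starRingEnd ℂ) z))

lemma reflectC_of_nonneg {F : ℂ → ℂ} {z : ℂ} (h : 0 ≤ z.im) : reflectC F z = F z := if_pos h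

lemma reflectC_of_neg {F : ℂ → ℂ} {z : ℂ} (h : z.im < 0) :
    reflectC F z = (starRingEnd ℂ) (F ((starRingEnd ℂ) z)) := if_neg (not_le.2 h)

lemma reflectC_continuousOn {F : ℂ → ℂ} {U : Set ℂ}
    (hU : ∀ z ∈ U, (starRingEnd ℂ) z ∈ U)
    (hF : ContinuousOn F (U ∩ {z | 0 ≤ z.im}))
    (hre : ∀ z ∈ U, z.im = 0 → (F z).im = 0) :
    ContinuousOn (reflectC F) U := by
  have hcl : IsClosed {z : ℂ | 0 ≤ z.im} := isClosed_le continuous_const Complex.continuous_im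
  have hcl' : IsClosed {z : ℂ | z.im ≤ 0} := isClosed_le Complex.continuous_im continuous_const
  have hsub : closure {z : ℂ | ¬ 0 ≤ z.im} ⊆ {z | z.im ≤ 0} := by
    refine closure_minimal ?_ hcl'
    intro z hz; simp at hz ⊢; exact hz.le
  unfold reflectC
  apply ContinuousOn.if
  · rintro z ⟨hz, hf⟩
    have h1 : 0 ≤ z.im := hcl.frontier_subset hf
    have h2 : z.im ≤ 0 := by
      rw [frontier_eq_closure_inter_closure] at hf
      exact hsub hf.2
    have h3 : z.im = 0 := le_antisymm h2 h1
    have h4 : (starRingEnd ℂ) z = z := Complex.conj_eq_iff_im.2 h3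
    rw [h4, Complex.conj_eq_iff_im.2 (hre z hz h3)]
  · rw [hcl.closure_eq]; exact hF
  · apply Complex.continuous_conj.comp_continuousOn
    apply hF.comp Complex.continuous_conj.continuousOn
    rintro z ⟨hz, hz'⟩
    refine ⟨hU z hz, ?_⟩
    have := hsub hz'
    simp at this ⊢; exact this

/-- A function continuous on `U` and holomorphic off the real axis has vanishing integral over
the boundary of every rectangle in `U`: a rectangle crossing the axis is split along it. -/
lemma isConservativeOn_of_off_real {g : ℂ → ℂ} {U : Set ℂ}
    (hc : ContinuousOn g U)
    (hd : ∀ z ∈ U, z.im ≠ 0 → DifferentiableAt ℂ g z) : Complex.IsConservativeOn g U := by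
  intro z w hR
  have key : ∀ z w : ℂ, Complex.Rectangle z w ⊆ U →
      0 ∉ Ioo (min z.im w.im) (max z.im w.im) →
      (∫ x : ℝ in z.re..w.re, g (x + z.im * Complex.I)) -
        (∫ x : ℝ in z.re..w.re, g (x + w.im * Complex.I)) +
      Complex.I • (∫ y : ℝ in z.im..w.im, g (w.re + y * Complex.I)) -
      Complex.I • (∫ y : ℝ in z.im..w.im, g (z.re + y * Complex.I)) = 0 := by
    intro z w hR h0
    apply Complex.integral_boundary_rect_eq_zero_of_continuousOn_of_differentiableOn
    · exact hc.mono hR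
    · intro p hp
      refine (hd p (hR ?_) ?_).differentiableWithinAt
      · refine ⟨?_, ?_⟩
        · exact Ioo_subset_Icc_self hp.1
        · exact Ioo_subset_Icc_self hp.2
      · intro h; apply h0; rw [← h]; exact hp.2
  rw [← add_eq_zero_iff_eq_neg, Complex.wedgeIntegral_add_wedgeIntegral_eq]
  by_cases h0 : (0 : ℝ) ∈ Ioo (min z.im w.im) (max z.im w.im)
  swap
  · exact key z w hR h0
  have h0' : (0 : ℝ) ∈ uIcc z.im w.im := Ioo_subset_Icc_self h0
  have e1 : uIcc z.im (0 : ℝ) ⊆ uIcc z.im w.im := uIcc_subset_uIcc left_mem_uIcc h0'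
  have e2 : uIcc (0 : ℝ) w.im ⊆ uIcc z.im w.im := uIcc_subset_uIcc h0' right_mem_uIcc
  have k1 := key z ⟨w.re, 0⟩ (fun p hp => hR ⟨hp.1, e1 hp.2⟩) (by
    simp only [mem_Ioo]; rintro ⟨ha, hb⟩
    rcases le_total z.im 0 with h | h
    · rw [max_eq_right h] at hb; exact lt_irrefl _ hb
    · rw [min_eq_right h] at ha; exact lt_irrefl _ ha)
  have k2 := key ⟨z.re, 0⟩ w (fun p hp => hR ⟨hp.1, e2 hp.2⟩) (by
    simp only [mem_Ioo]; rintro ⟨ha, hb⟩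
    rcases le_total w.im 0 with h | h
    · rw [max_eq_left h] at hb; exact lt_irrefl _ hb
    · rw [min_eq_left h] at ha; exact lt_irrefl _ ha)
  have hHI : ∀ a ∈ uIcc z.re w.re, ∀ c d : ℝ, uIcc c d ⊆ uIcc z.im w.im →
      IntervalIntegrable (fun y : ℝ => g (a + y * Complex.I)) MeasureTheory.volume c d := by
    intro a ha c d hcd
    apply ContinuousOn.intervalIntegrable
    apply hc.comp (by fun_prop)
    intro y hy
    apply hR
    refine ⟨by simpa using ha, by simpa using hcd hy⟩
  have a1 := intervalIntegral.integral_add_adjacent_intervals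
    (hHI w.re right_mem_uIcc _ _ e1) (hHI w.re right_mem_uIcc _ _ e2)
  have a2 := intervalIntegral.integral_add_adjacent_intervals
    (hHI z.re left_mem_uIcc _ _ e1) (hHI z.re left_mem_uIcc _ _ e2)
  simp only [smul_eq_mul] at k1 k2 ⊢
  rw [← a1, ← a2]
  linear_combination k1 + k2

/-- Schwarz reflection across the real axis. -/
lemma reflectC_differentiableOn {F : ℂ → ℂ} {U : Set ℂ} (hUo : IsOpen U)
    (hU : ∀ z ∈ U, (starRingEnd ℂ) z ∈ U)
    (hF : ContinuousOn F (U ∩ {z | 0 ≤ z.im}))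
    (hd : DifferentiableOn ℂ F (U ∩ {z | 0 < z.im}))
    (hre : ∀ z ∈ U, z.im = 0 → (F z).im = 0) :
    DifferentiableOn ℂ (reflectC F) U := by
  have hop : IsOpen {z : ℂ | 0 < z.im} := isOpen_lt continuous_const Complex.continuous_im
  have hop' : IsOpen {z : ℂ | z.im < 0} := isOpen_lt Complex.continuous_im continuous_const
  have hc := reflectC_continuousOn hU hF hre
  have hoff : ∀ z ∈ U, z.im ≠ 0 → DifferentiableAt ℂ (reflectC F) z := by
    intro z hz hz0
    rcases lt_or_gt_of_ne hz0 with h | h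
    · have h1 : DifferentiableAt ℂ F ((starRingEnd ℂ) z) :=
        hd.differentiableAt ((hUo.inter hop).mem_nhds ⟨hU z hz, by simpa using h⟩)
      have h2 := h1.conj_conj
      simp only [Complex.conj_conj] at h2
      refine h2.congr_of_eventuallyEq ?_
      filter_upwards [hop'.mem_nhds h] with y hy
      exact reflectC_of_neg hy
    · refine (hd.differentiableAt ((hUo.inter hop).mem_nhds ⟨hz, h⟩)).congr_of_eventuallyEq ?_
      filter_upwards [hop.mem_nhds h] with y hy
      exact reflectC_of_nonneg (le_of_lt hy)
  intro z hz
  obtain ⟨r, hr, hb⟩ := Metric.isOpen_iff.1 hUo z hz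
  have hcons : Complex.IsConservativeOn (reflectC F) (Metric.ball z r) :=
    isConservativeOn_of_off_real (hc.mono hb) (fun y hy => hoff y (hb hy))
  have := (hcons.isExactOn_ball (hc.mono hb)).differentiableOn Metric.isOpen_ball
  exact (this.differentiableAt (Metric.ball_mem_nhds z hr)).differentiableWithinAt

/-- A function with nonnegative imaginary part above a real interval and real on it is
nondecreasing there: after reflection, its derivative at a real point is the limit of
`Im F (x + i y) / y ≥ 0`. -/
lemma mono_of_im_nonneg {F : ℂ → ℂ} {a r : ℝ}
    (hF : ContinuousOn F (Metric.ball (a : ℂ) r ∩ {z | 0 ≤ z.im}))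
    (hd : DifferentiableOn ℂ F (Metric.ball (a : ℂ) r ∩ {z | 0 < z.im}))
    (hre : ∀ z ∈ Metric.ball (a : ℂ) r, z.im = 0 → (F z).im = 0)
    (him : ∀ z ∈ Metric.ball (a : ℂ) r, 0 < z.im → 0 ≤ (F z).im) :
    MonotoneOn (fun x : ℝ => (F x).re) (Ioo (a - r) (a + r)) := by
  have hsym : ∀ z ∈ Metric.ball (a : ℂ) r, (starRingEnd ℂ) z ∈ Metric.ball (a : ℂ) r := by
    intro z hz
    rw [mem_ball_iff_norm] at hz ⊢
    rw [← Complex.norm_conj]; simpa using hz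
  have hD := reflectC_differentiableOn Metric.isOpen_ball hsym hF hd hre
  have hmem : ∀ x ∈ Ioo (a - r) (a + r), (x : ℂ) ∈ Metric.ball (a : ℂ) r := by
    intro x hx
    rw [mem_ball_iff_norm, ← Complex.ofReal_sub, Complex.norm_real, Real.norm_eq_abs, abs_lt]
    constructor <;> linarith [hx.1, hx.2]
  have hder : ∀ x ∈ Ioo (a - r) (a + r),
      HasDerivAt (fun x : ℝ => (F x).re) (deriv (reflectC F) x).re x := by
    intro x hx
    have h1 := (hD.differentiableAt (Metric.isOpen_ball.mem_nhds (hmem x hx))).hasDerivAt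
    have h2 := h1.real_of_complex
    refine h2.congr_of_eventuallyEq ?_
    filter_upwards with y
    rw [reflectC_of_nonneg (by simp)]
  have hnn : ∀ x ∈ Ioo (a - r) (a + r), 0 ≤ (deriv (reflectC F) x).re := by
    intro x hx
    have hx' := hmem x hx
    have h1 := (hD.differentiableAt (Metric.isOpen_ball.mem_nhds hx')).hasDerivAt
    -- the derivative along the imaginary direction
    have h2 : HasDerivAt (fun y : ℝ => reflectC F (x + y * Complex.I))
        (deriv (reflectC F) x * Complex.I) 0 := by
      have h3 : HasDerivAt (fun y : ℂ => (x : ℂ) + y * Complex.I) Complex.I ((0 : ℝ) : ℂ) := by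
        simpa using ((hasDerivAt_id ((0 : ℝ) : ℂ)).mul_const Complex.I).const_add (x : ℂ)
      have h4 : HasDerivAt (reflectC F) (deriv (reflectC F) x)
          ((x : ℂ) + ((0 : ℝ) : ℂ) * Complex.I) := by simpa using h1
      exact (HasDerivAt.comp (h₂ := reflectC F) (h := fun y : ℂ => (x:ℂ)+y*Complex.I) ((0:ℝ):ℂ) h4 h3).comp_ofReal
    have h5 : HasDerivAt (fun y : ℝ => (reflectC F (x + y * Complex.I)).im)
        (deriv (reflectC F) x).re 0 := by
      have := (Complex.imCLM.hasFDerivAt.comp_hasDerivAt (0 : ℝ) h2)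
      simpa [Function.comp_def] using this
    have h6 := h5.tendsto_slope_zero_right
    refine ge_of_tendsto h6 ?_
    have hev : ∀ᶠ y : ℝ in nhdsWithin 0 (Ioi 0), (x : ℂ) + y * Complex.I ∈ Metric.ball (a : ℂ) r := by
      apply mem_nhdsWithin_of_mem_nhds
      have hcont : Continuous (fun y : ℝ => (x : ℂ) + y * Complex.I) := by fun_prop
      exact hcont.continuousAt.preimage_mem_nhds (Metric.isOpen_ball.mem_nhds (by simpa using hx'))
    filter_upwards [hev, self_mem_nhdsWithin] with y hy hy0
    have hy0' : 0 < y := hy0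
    have e : (reflectC F ((x : ℂ) + ((0 : ℝ) : ℂ) * Complex.I)).im = 0 := by
      rw [reflectC_of_nonneg (by simp)]
      simpa using hre x hx' (by simp)
    have e1 : 0 ≤ (reflectC F ((x : ℂ) + (y : ℂ) * Complex.I)).im := by
      rw [reflectC_of_nonneg (by simp [hy0'.le])]
      exact him _ hy (by simp [hy0'])
    simp only [zero_add, e, sub_zero, smul_eq_mul]
    positivity
  apply monotoneOn_of_deriv_nonneg (convex_Ioo _ _)
  · exact fun x hx => (hder x hx).continuousAt.continuousWithinAt
  · rw [interior_Ioo]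
    exact fun x hx => (hder x hx).differentiableAt.differentiableWithinAt
  · rw [interior_Ioo]
    intro x hx
    rw [(hder x hx).deriv]; exact hnn x hx

/-! ### Phragmén–Lindelöf and Harnack on the quadrant -/

lemma closure_Q : closure Q = {z : ℂ | 0 ≤ z.re ∧ 0 ≤ z.im} := by
  have : Q = Ioi (0 : ℝ) ×ℂ Ioi (0 : ℝ) := rfl
  rw [this, Complex.closure_reProdIm, closure_Ioi]
  rfl

lemma Q_subset_closed : Q ⊆ {z : ℂ | 0 ≤ z.re ∧ 0 ≤ z.im} := fun _ h => ⟨h.1.le, h.2.le⟩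

lemma isOpen_Q : IsOpen Q :=
  (isOpen_lt continuous_const Complex.continuous_re).inter
    (isOpen_lt continuous_const Complex.continuous_im)

/-- The hypotheses under which a function on the closed first quadrant reflects across the
positive real axis to the right half-plane. -/
structure QuadData (H : ℂ → ℂ) : Prop where
  cont : ContinuousOn H {z : ℂ | 0 ≤ z.re ∧ 0 ≤ z.im}
  diff : DifferentiableOn ℂ H Q
  real : ∀ x : ℝ, 0 ≤ x → (H x).im = 0

lemma QuadData.real' {H : ℂ → ℂ} (h : QuadData H) {z : ℂ} (hz : 0 ≤ z.re) (h0 : z.im = 0) :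
    (H z).im = 0 := by
  have : z = (z.re : ℂ) := by apply Complex.ext <;> simp [h0]
  rw [this]; exact h.real _ hz

lemma QuadData.diffContOnCl {H : ℂ → ℂ} (h : QuadData H) :
    DiffContOnCl ℂ (reflectC H) {z | 0 < z.re} := by
  constructor
  · apply reflectC_differentiableOn (isOpen_lt continuous_const Complex.continuous_re)
    · intro z hz; simpa using hz
    · exact h.cont.mono (fun z hz => ⟨le_of_lt hz.1, hz.2⟩)
    · exact h.diff.mono (fun z hz => ⟨hz.1, hz.2⟩)
    · exact fun z hz h0 => h.real' (le_of_lt hz) h0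
  · rw [Complex.closure_setOfPred_lt_re]
    apply reflectC_continuousOn
    · intro z hz; simpa using hz
    · exact h.cont.mono (fun z hz => ⟨hz.1, hz.2⟩)
    · exact fun z hz h0 => h.real' hz h0

/-- The real part of the reflected function is even in the imaginary part, so bounds on the
closed quadrant transfer to the half-plane. -/
lemma reflectC_re {H : ℂ → ℂ} (z : ℂ) :
    (reflectC H z).re = (H ⟨z.re, |z.im|⟩).re := by
  rcases le_or_gt 0 z.im with h | h
  · rw [reflectC_of_nonneg h, abs_of_nonneg h]
  · rw [reflectC_of_neg h, abs_of_neg h, Complex.conj_re]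
    congr 2

lemma norm_mk_abs (z : ℂ) : ‖(⟨z.re, |z.im|⟩ : ℂ)‖ = ‖z‖ := by
  rw [Complex.norm_def, Complex.norm_def, Complex.normSq_apply, Complex.normSq_apply]
  simp

/-- Phragmén–Lindelöf: nonpositive real part on the imaginary axis and sublinear growth force
nonpositive real part on the quadrant. The half-plane theorem is applied to `exp (H - ε z)`
after reflection, and then `ε → 0`. -/
lemma QuadData.re_nonpos {H : ℂ → ℂ} (h : QuadData H)
    (him : ∀ y : ℝ, 0 ≤ y → (H (y * Complex.I)).re ≤ 0)
    (hg : ∀ ε > (0 : ℝ), ∃ R : ℝ, ∀ z : ℂ, 0 ≤ z.re → 0 ≤ z.im → R ≤ ‖z‖ → (H z).re ≤ ε * ‖z‖)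
    {z : ℂ} (hz : 0 ≤ z.re) (hz' : 0 ≤ z.im) : (H z).re ≤ 0 := by
  have hε : ∀ ε > (0 : ℝ), (H z).re ≤ ε * z.re := by
    intro ε hε
    set f : ℂ → ℂ := fun w => Complex.exp (reflectC H w - ε * w) with hf
    have hn : ∀ w, ‖f w‖ = Real.exp ((reflectC H w).re - ε * w.re) := by
      intro w; rw [hf, Complex.norm_exp]; simp
    have hdc : DiffContOnCl ℂ f {z | 0 < z.re} := by
      constructor
      · exact ((h.diffContOnCl.1).sub (by fun_prop)).cexp
      · exact ((h.diffContOnCl.2).sub (by fun_prop)).cexp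
    have key := PhragmenLindelof.right_half_plane_of_tendsto_zero_on_real (f := f) (C := 1) (z := z)
      hdc ?_ ?_ ?_ hz
    · rw [hn, ← Real.exp_zero, Real.exp_le_exp, reflectC_of_nonneg hz'] at key
      linarith
    · refine ⟨1, by norm_num, 1, ?_⟩
      obtain ⟨R, hR⟩ := hg 1 one_pos
      apply Asymptotics.IsBigO.of_bound 1
      have h1 : ∀ᶠ w : ℂ in Bornology.cobounded ℂ, R ≤ ‖w‖ :=
        tendsto_norm_cobounded_atTop.eventually_ge_atTop R
      filter_upwards [h1.filter_mono inf_le_left, mem_inf_of_right (mem_principal_self _)]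
        with w hw hw0
      have hw0' : 0 < w.re := hw0
      rw [hn, one_mul, Real.norm_eq_abs, Real.abs_exp, Real.exp_le_exp, reflectC_re]
      have := hR ⟨w.re, |w.im|⟩ hw0'.le (abs_nonneg _) (by rw [norm_mk_abs]; exact hw)
      rw [norm_mk_abs] at this
      simp only [Real.rpow_one]
      have : 0 ≤ ε * w.re := by positivity
      linarith
    · obtain ⟨R, hR⟩ := hg (ε / 2) (by positivity)
      apply squeeze_zero_norm' (a := fun x : ℝ => Real.exp (-(ε / 2 * x)))
      · filter_upwards [eventually_ge_atTop R, eventually_ge_atTop 0] with x hx hx0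
        rw [hn, Real.exp_le_exp, reflectC_re]
        have e : ‖(⟨x, |((x : ℂ)).im|⟩ : ℂ)‖ = x := by
          have := norm_mk_abs (x : ℂ)
          rw [Complex.ofReal_re] at this
          rw [this]; simp [abs_of_nonneg hx0]
        have := hR ⟨x, |((x : ℂ)).im|⟩ hx0 (abs_nonneg _) (by rw [e]; exact hx)
        rw [e] at this
        rw [Complex.ofReal_re]
        linarith
      · apply Real.tendsto_exp_neg_atTop_nhds_zero.comp
        exact tendsto_id.const_mul_atTop (by positivity)
    · intro x
      rw [hn, ← Real.exp_zero, Real.exp_le_exp, reflectC_re]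
      have := him |x| (abs_nonneg _)
      have e : (⟨((x : ℂ) * Complex.I).re, |((x : ℂ) * Complex.I).im|⟩ : ℂ) = (|x| : ℝ) * Complex.I := by
        apply Complex.ext <;> simp
      rw [e]; simpa using this
  by_contra! hcon
  have h1 := hε ((H z).re / (2 * (z.re + 1))) (by positivity)
  have h2 : (H z).re / (2 * (z.re + 1)) * z.re < (H z).re := by
    rw [div_mul_eq_mul_div, div_lt_iff₀ (by positivity)]
    nlinarith
  linarith

/-- A Harnack inequality: a holomorphic function with nonnegative real part on the right
half-plane is controlled by its value at `1`. -/
lemma harnack_rhp {g : ℂ → ℂ} (hd : DifferentiableOn ℂ g {z | 0 < z.re})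
    (hg : ∀ z : ℂ, 0 < z.re → 0 ≤ (g z).re) {z : ℂ} (hz : 0 < z.re) :
    ‖g z‖ ≤ ‖g 1‖ * (‖z + 1‖ ^ 2 / z.re) := by
  -- the strict version, by the Schwarz lemma after two Cayley transforms
  have key : ∀ G : ℂ → ℂ, DifferentiableOn ℂ G {z | 0 < z.re} →
      (∀ z : ℂ, 0 < z.re → 0 < (G z).re) → ‖G z‖ ≤ ‖G 1‖ * (‖z + 1‖ ^ 2 / z.re) := by
    intro G hGd hG
    have hcay : ∀ w ∈ Metric.ball (0 : ℂ) 1, 0 < ((1 + w) / (1 - w)).re := by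
      intro w hw
      have hw1 : ‖w‖ < 1 := by simpa using hw
      have hne : 1 - w ≠ 0 := by
        intro h; rw [sub_eq_zero] at h; rw [← h] at hw1; simp at hw1
      have hn : 0 < Complex.normSq (1 - w) := Complex.normSq_pos.2 hne
      have h1 : w.re ^ 2 + w.im ^ 2 < 1 := by
        have := Complex.sq_norm w
        rw [Complex.normSq_apply] at this
        nlinarith [norm_nonneg w]
      rw [Complex.div_re, ← add_div]
      apply div_pos _ hn
      simp
      nlinarith
    have hden : ∀ u : ℂ, 0 < u.re → u + (starRingEnd ℂ) (G 1) ≠ 0 := by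
      intro u hu h
      have := congrArg Complex.re h
      simp at this
      linarith [hG 1 (by simp)]
    have hlt : ∀ u : ℂ, 0 < u.re → ‖(u - G 1) / (u + (starRingEnd ℂ) (G 1))‖ < 1 := by
      intro u hu
      rw [norm_div, div_lt_one (norm_pos_iff.2 (hden u hu))]
      have h1 := hG 1 (by simp)
      apply lt_of_pow_lt_pow_left₀ 2 (norm_nonneg _)
      rw [Complex.sq_norm, Complex.sq_norm, Complex.normSq_apply, Complex.normSq_apply]
      simp
      nlinarith [mul_pos hu h1]
    set m : ℂ → ℂ := fun w =>
      (G ((1 + w) / (1 - w)) - G 1) / (G ((1 + w) / (1 - w)) + (starRingEnd ℂ) (G 1)) with hm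
    have hmd : DifferentiableOn ℂ m (Metric.ball 0 1) := by
      have h1 : DifferentiableOn ℂ (fun w : ℂ => (1 + w) / (1 - w)) (Metric.ball 0 1) := by
        intro w hw
        have hw1 : ‖w‖ < 1 := by simpa using hw
        have hne : 1 - w ≠ 0 := by
          intro h; rw [sub_eq_zero] at h; rw [← h] at hw1; simp at hw1
        exact (DifferentiableAt.div (by fun_prop) (by fun_prop) hne).differentiableWithinAt
      have h2 := hGd.comp h1 (fun w hw => hcay w hw)
      exact (h2.sub_const _).div (h2.add_const _) (fun w hw => hden _ (hG _ (hcay w hw)))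
    have hmaps : MapsTo m (Metric.ball 0 1) (Metric.ball 0 1) := by
      intro w hw
      rw [mem_ball_zero_iff]
      exact hlt _ (hG _ (hcay w hw))
    have hm0 : m 0 = 0 := by simp [hm]
    have hz1 : z + 1 ≠ 0 := by
      intro h; have := congrArg Complex.re h; simp at this; linarith
    have hsq : ‖z + 1‖ ^ 2 - ‖z - 1‖ ^ 2 = 4 * z.re := by
      rw [Complex.sq_norm, Complex.sq_norm, Complex.normSq_apply, Complex.normSq_apply]
      simp; ring
    have hlt1 : ‖z - 1‖ < ‖z + 1‖ := by
      apply lt_of_pow_lt_pow_left₀ 2 (norm_nonneg _); linarith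
    have hp : 0 < ‖z + 1‖ := norm_pos_iff.2 hz1
    have hw : ‖(z - 1) / (z + 1)‖ < 1 := by
      rw [norm_div, div_lt_one hp]; exact hlt1
    have hS := Complex.norm_le_norm_of_mapsTo_ball hmd (hmaps.mono_right Metric.ball_subset_closedBall) hm0 hw
    have hback : (1 + (z - 1) / (z + 1)) / (1 - (z - 1) / (z + 1)) = z := by
      have : (1 : ℂ) - (z - 1) / (z + 1) ≠ 0 := by
        have : (1 : ℂ) - (z - 1) / (z + 1) = 2 / (z + 1) := by field_simp; ring
        rw [this]; exact div_ne_zero two_ne_zero hz1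
      field_simp
      ring
    simp only [hm, hback] at hS
    rw [norm_div, norm_div, div_le_div_iff₀ (norm_pos_iff.2 (hden _ (hG z hz))) hp] at hS
    have t1 : ‖G z‖ - ‖G 1‖ ≤ ‖G z - G 1‖ := norm_sub_norm_le _ _
    have t2 : ‖G z + (starRingEnd ℂ) (G 1)‖ ≤ ‖G z‖ + ‖G 1‖ := by
      refine (norm_add_le _ _).trans ?_
      rw [Complex.norm_conj]
    have t3 : (‖G z‖ - ‖G 1‖) * ‖z + 1‖ ≤ ‖z - 1‖ * (‖G z‖ + ‖G 1‖) := by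
      calc _ ≤ ‖G z - G 1‖ * ‖z + 1‖ := by gcongr
        _ ≤ _ := hS
        _ ≤ _ := by gcongr
    have t4 : ‖G z‖ * (‖z + 1‖ - ‖z - 1‖) ≤ ‖G 1‖ * (‖z + 1‖ + ‖z - 1‖) := by nlinarith
    rw [← mul_div_assoc, le_div_iff₀ hz]
    have t5 : ‖G z‖ * (4 * z.re) ≤ ‖G 1‖ * (‖z + 1‖ + ‖z - 1‖) ^ 2 := by
      rw [← hsq]
      nlinarith [norm_nonneg (z - 1)]
    have t6 : (‖z + 1‖ + ‖z - 1‖) ^ 2 ≤ (2 * ‖z + 1‖) ^ 2 := by gcongr; linarith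
    nlinarith [mul_le_mul_of_nonneg_left t6 (norm_nonneg (G 1))]
  have hlim : ∀ ε > (0 : ℝ), ‖g z + ε‖ ≤ ‖g 1 + ε‖ * (‖z + 1‖ ^ 2 / z.re) := by
    intro ε hε
    apply key (fun w => g w + ε) (hd.add_const _)
    intro w hw
    simp
    linarith [hg w hw]
  have hA : Tendsto (fun ε : ℝ => ‖g z + ε‖) (nhdsWithin 0 (Ioi 0)) (nhds ‖g z‖) := by
    have : Continuous (fun ε : ℝ => ‖g z + ε‖) := by fun_prop
    simpa using (this.tendsto 0).mono_left nhdsWithin_le_nhds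
  have hB : Tendsto (fun ε : ℝ => ‖g 1 + ε‖ * (‖z + 1‖ ^ 2 / z.re)) (nhdsWithin 0 (Ioi 0))
      (nhds (‖g 1‖ * (‖z + 1‖ ^ 2 / z.re))) := by
    have : Continuous (fun ε : ℝ => ‖g 1 + ε‖ * (‖z + 1‖ ^ 2 / z.re)) := by fun_prop
    simpa using (this.tendsto 0).mono_left nhdsWithin_le_nhds
  refine le_of_tendsto_of_tendsto hA hB ?_
  filter_upwards [self_mem_nhdsWithin] with ε hε
  exact hlim ε hε

/-! ### The region `Ω_B` and its conformal map -/

lemma gB_eq (B y : ℝ) : gB B y = Real.arccos (Real.cosh B / Real.cosh (max y B)) := by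
  unfold gB
  split_ifs with h
  · rw [max_eq_right h, div_self (Real.cosh_pos B).ne', Real.arccos_one]
  · rw [max_eq_left (not_le.1 h).le]

lemma gB_continuous (B : ℝ) : Continuous (gB B) := by
  have : gB B = fun y => Real.arccos (Real.cosh B / Real.cosh (max y B)) := funext (gB_eq B)
  rw [this]
  apply Real.continuous_arccos.comp
  apply continuous_const.div
  · exact Real.continuous_cosh.comp (continuous_id.max continuous_const)
  · exact fun y => (Real.cosh_pos _).ne'

lemma gB_nonneg (B y : ℝ) : 0 ≤ gB B y := by
  rw [gB_eq]; exact Real.arccos_nonneg _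

lemma gB_of_le {B y : ℝ} (h : y ≤ B) : gB B y = 0 := if_pos h

lemma gB_lt (B y : ℝ) : gB B y < Real.pi / 2 := by
  rw [gB_eq]
  exact Real.arccos_lt_pi_div_two.2 (div_pos (Real.cosh_pos _) (Real.cosh_pos _))

lemma cos_gB {B y : ℝ} (hB : 0 < B) (h : B ≤ y) : Real.cos (gB B y) * Real.cosh y = Real.cosh B := by
  rw [gB_eq, max_eq_left h, Real.cos_arccos]
  · exact div_mul_cancel₀ _ (Real.cosh_pos _).ne'
  · linarith [div_pos (Real.cosh_pos B) (Real.cosh_pos y)]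
  · rw [div_le_one (Real.cosh_pos _)]
    rw [Real.cosh_le_cosh, abs_of_pos hB, abs_of_pos (hB.trans_le h)]; exact h

lemma isOpen_ΩB (B : ℝ) : IsOpen (ΩB B) :=
  (isOpen_lt continuous_const Complex.continuous_im).inter
    (isOpen_lt ((gB_continuous B).comp Complex.continuous_im) Complex.continuous_re)

/-- What is used of the normalized conformal map of the quadrant onto `Ω_B`: bijectivity enters
only through `bdry`, which says that no boundary point of the quadrant is sent into `Ω_B`, and the
normalization at infinity is stated on the closed quadrant. -/
structure MapData (A B : ℝ) (φ : ℂ → ℂ) : Prop where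
  Apos : 0 < A
  Bpos : 0 < B
  cont : ContinuousOn φ {z : ℂ | 0 ≤ z.re ∧ 0 ≤ z.im}
  diff : DifferentiableOn ℂ φ Q
  maps : ∀ z ∈ Q, φ z ∈ ΩB B
  im_nonneg : ∀ z : ℂ, 0 ≤ z.re → 0 ≤ z.im → 0 ≤ (φ z).im
  gB_le : ∀ z : ℂ, 0 ≤ z.re → 0 ≤ z.im → gB B (φ z).im ≤ (φ z).re
  bdry : ∀ z : ℂ, 0 ≤ z.re → 0 ≤ z.im → z ∉ Q → (φ z).im = 0 ∨ (φ z).re = gB B (φ z).im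
  zero : φ 0 = B * Complex.I
  at_A : φ A = 0
  growth : ∀ ε > (0 : ℝ), ∃ R : ℝ, ∀ z : ℂ, 0 ≤ z.re → 0 ≤ z.im → R ≤ ‖z‖ →
    ‖φ z - z‖ ≤ ε * ‖z‖

/-- A continuous extension of an open injective map sends boundary points off the open image. -/
lemma bdry_not_mem {φ : ℂ → ℂ} {V : Set ℂ} (hcont : ContinuousOn φ (closure Q))
    (hholo : DifferentiableOn ℂ φ Q) (hbij : BijOn φ Q V) {z : ℂ} (hz : z ∈ closure Q)
    (hzQ : z ∉ Q) : φ z ∉ V := by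
  intro hV
  obtain ⟨w, hw, hwz⟩ := hbij.surjOn hV
  have hne : w ≠ z := fun h => hzQ (h ▸ hw)
  obtain ⟨V₁, W₁, hV₁, hW₁, hwV, hzW, hdisj⟩ := t2_separation hne
  have han : AnalyticAt ℂ φ w := hholo.analyticAt (isOpen_Q.mem_nhds hw)
  rcases han.eventually_constant_or_nhds_le_map_nhds with hc | ho
  · -- an injective function is not locally constant
    have h1 : ∀ᶠ u in 𝓝 w, u ∈ Q ∧ φ u = φ w := (isOpen_Q.mem_nhds hw |> eventually_mem_set.2).and hc
    have h2 : ∀ᶠ u in 𝓝 w, u = w := h1.mono fun u hu => hbij.injOn hu.1 hw hu.2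
    have h3 : ∀ᶠ u in 𝓝[≠] w, u = w := h2.filter_mono nhdsWithin_le_nhds
    obtain ⟨u, hu1, hu2⟩ := (h3.and self_mem_nhdsWithin).exists
    exact hu2 hu1
  · have h1 : φ '' (V₁ ∩ Q) ∈ map φ (𝓝 w) :=
      image_mem_map (inter_mem (hV₁.mem_nhds hwV) (isOpen_Q.mem_nhds hw))
    have h2 := ho h1
    rw [hwz] at h2
    have h3 : Tendsto φ (𝓝[Q] z) (𝓝 (φ z)) := (hcont z hz).mono_left (nhdsWithin_mono _ subset_closure)
    have h4 := h3.eventually h2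
    have : (𝓝[Q] z).NeBot := mem_closure_iff_nhdsWithin_neBot.1 hz
    obtain ⟨u, ⟨⟨v, ⟨hv1, hv2⟩, hvu⟩, huQ⟩, huW⟩ := ((h4.and self_mem_nhdsWithin).and
      (mem_nhdsWithin_of_mem_nhds (hW₁.mem_nhds hzW))).exists
    have : v = u := hbij.injOn hv2 huQ hvu
    exact Set.disjoint_left.1 hdisj hv1 (this ▸ huW)

lemma MapData.mk' {A B : ℝ} {φ : ℂ → ℂ} (hA : 0 < A) (hB : 0 < B)
    (hcont : ContinuousOn φ (closure Q))
    (hmaps : MapsTo φ (closure Q) (closure (ΩB B)))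
    (hholo : DifferentiableOn ℂ φ Q)
    (hbij : BijOn φ Q (ΩB B))
    (hlim : Tendsto (fun z => φ z / z) (comap (fun z : ℂ => ‖z‖) atTop ⊓ principal Q) (nhds 1))
    (h0 : φ 0 = (B : ℂ) * Complex.I) (hA0 : φ A = 0) : MapData A B φ := by
  have hcl : closure (ΩB B) ⊆ {z : ℂ | 0 ≤ z.im ∧ gB B z.im ≤ z.re} := by
    refine closure_minimal (fun z hz => ⟨hz.1.le, hz.2.le⟩) ?_
    exact (isClosed_le continuous_const Complex.continuous_im).inter
      (isClosed_le ((gB_continuous B).comp Complex.continuous_im) Complex.continuous_re)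
  have hQ : ∀ z : ℂ, 0 ≤ z.re → 0 ≤ z.im → z ∈ closure Q := fun z h1 h2 => by
    rw [closure_Q]; exact ⟨h1, h2⟩
  refine ⟨hA, hB, closure_Q ▸ hcont, hholo, hbij.mapsTo, fun z h1 h2 => (hcl (hmaps (hQ z h1 h2))).1,
    fun z h1 h2 => (hcl (hmaps (hQ z h1 h2))).2, ?_, h0, hA0, ?_⟩
  · intro z h1 h2 h3
    have hn := bdry_not_mem hcont hholo hbij (hQ z h1 h2) h3
    have h4 := hcl (hmaps (hQ z h1 h2))
    by_contra! hcon
    exact hn ⟨lt_of_le_of_ne h4.1 (Ne.symm hcon.1), lt_of_le_of_ne h4.2 (Ne.symm hcon.2)⟩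
  · intro ε hε
    have h1 := hlim (Metric.closedBall_mem_nhds 1 hε)
    rw [mem_map, mem_inf_principal, mem_comap] at h1
    obtain ⟨t, ht, ht'⟩ := h1
    obtain ⟨R, hR⟩ := mem_atTop_sets.1 ht
    refine ⟨max R 0 + 1, ?_⟩
    have hHI : ∀ z ∈ Q, max R 0 < ‖z‖ → ‖φ z - z‖ ≤ ε * ‖z‖ := by
      intro z hz hzR
      have h2 : φ z / z ∈ Metric.closedBall (1 : ℂ) ε :=
        ht' (hR _ ((le_max_left _ _).trans hzR.le)) hz
      have hz0 : 0 < ‖z‖ := (le_max_right R 0).trans_lt hzR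
      have hz0' : z ≠ 0 := norm_pos_iff.1 hz0
      rw [mem_closedBall_iff_norm] at h2
      have h3 : φ z - z = (φ z / z - 1) * z := by field_simp
      rw [h3, norm_mul]
      gcongr
    intro z hz1 hz2 hz3
    have hzc := hQ z hz1 hz2
    have : (𝓝[Q] z).NeBot := mem_closure_iff_nhdsWithin_neBot.1 hzc
    have hφ : Tendsto φ (𝓝[Q] z) (𝓝 (φ z)) := (hcont z hzc).mono_left (nhdsWithin_mono _ subset_closure)
    have hid : Tendsto (fun u : ℂ => u) (𝓝[Q] z) (𝓝 z) := tendsto_id.mono_left nhdsWithin_le_nhds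
    refine le_of_tendsto_of_tendsto (hφ.sub hid).norm (hid.norm.const_mul ε) ?_
    have : ∀ᶠ u in 𝓝[Q] z, max R 0 < ‖u‖ := hid.norm.eventually_const_lt (by linarith)
    filter_upwards [this, self_mem_nhdsWithin] with u hu huQ
    exact hHI u huQ hu

/-- A continuous function which cannot cross the level `c` upwards stays below it. -/
lemma level_le {u : ℝ → ℝ} {a b c : ℝ} (hu : ContinuousOn u (Icc a b)) (ha : u a ≤ c)
    (hloc : ∀ x ∈ Ico a b, u x = c → ∀ᶠ y in 𝓝[>] x, u y ≤ c) : ∀ x ∈ Icc a b, u x ≤ c := by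
  have := IsClosed.Icc_subset_of_forall_mem_nhdsWithin (s := {x | u x ≤ c}) (a := a) (b := b) ?_ ha ?_
  · exact this
  · have := hu.preimage_isClosed_of_isClosed isClosed_Icc (isClosed_Iic (a := c))
    rwa [inter_comm] at this
  · rintro x ⟨hx, hx'⟩
    rcases eq_or_lt_of_le (show u x ≤ c from hx) with h | h
    · exact hloc x hx' h
    · have h1 : ContinuousWithinAt u (Ioc x b) x :=
        (hu x (Ico_subset_Icc_self hx')).mono (fun y hy => ⟨hx'.1.trans hy.1.le, hy.2⟩)
      have h2 : ∀ᶠ y in 𝓝[Ioc x b] x, u y < c := h1.tendsto.eventually_lt_const h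
      rw [nhdsWithin_Ioc_eq_nhdsGT hx'.2] at h2
      exact h2.mono fun y hy => hy.le

/-- Local form of `mono_of_im_nonneg`. -/
lemma mono_local {F : ℂ → ℂ} {a : ℝ} {U : Set ℂ} (hU : IsOpen U) (haU : (a : ℂ) ∈ U)
    (hF : ContinuousOn F (U ∩ {z | 0 ≤ z.im}))
    (hd : DifferentiableOn ℂ F (U ∩ {z | 0 < z.im}))
    (hev : ∀ᶠ z in 𝓝[U ∩ {z | 0 ≤ z.im}] (a : ℂ),
      (z.im = 0 → (F z).im = 0) ∧ (0 < z.im → 0 ≤ (F z).im)) :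
    ∀ᶠ δ in 𝓝[>] (0 : ℝ), (F a).re ≤ (F (a + δ : ℝ)).re ∧ (F (a - δ : ℝ)).re ≤ (F a).re := by
  obtain ⟨r, hr, hb⟩ := Metric.mem_nhdsWithin_iff.1 (hev)
  obtain ⟨r', hr', hb'⟩ := Metric.isOpen_iff.1 hU a haU
  set s := min r r' with hs
  have hs0 : 0 < s := lt_min hr hr'
  have hsub : Metric.ball (a : ℂ) s ⊆ Metric.ball (a : ℂ) r := Metric.ball_subset_ball (min_le_left _ _)
  have hsub' : Metric.ball (a : ℂ) s ⊆ U :=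
    (Metric.ball_subset_ball (min_le_right _ _)).trans hb'
  have hm := mono_of_im_nonneg (F := F) (a := a) (r := s)
    (hF.mono (fun z hz => ⟨hsub' hz.1, hz.2⟩)) (hd.mono (fun z hz => ⟨hsub' hz.1, hz.2⟩))
    (fun z hz h => (hb ⟨hsub hz, ⟨hsub' hz, h.ge⟩⟩).1 h)
    (fun z hz h => (hb ⟨hsub hz, ⟨hsub' hz, le_of_lt h⟩⟩).2 h)
  filter_upwards [Ioo_mem_nhdsGT hs0] with δ hδ
  refine ⟨hm (by constructor <;> linarith) (by constructor <;> linarith [hδ.1, hδ.2]) (by linarith [hδ.1]),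
    hm (by constructor <;> linarith [hδ.1, hδ.2]) (by constructor <;> linarith) (by linarith [hδ.1])⟩

lemma eventually_gt_of_add {p : ℝ → Prop} {a : ℝ} (h : ∀ᶠ δ in 𝓝[>] (0 : ℝ), p (a + δ)) :
    ∀ᶠ x in 𝓝[>] a, p x := by
  have h1 : Tendsto (fun x : ℝ => x - a) (𝓝[>] a) (𝓝[>] 0) := by
    apply tendsto_nhdsWithin_of_tendsto_nhds_of_eventually_within
    · have : Continuous (fun x : ℝ => x - a) := by fun_prop
      simpa using (this.tendsto a).mono_left nhdsWithin_le_nhds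
    · filter_upwards [self_mem_nhdsWithin] with x hx
      have : a < x := hx
      simp [this]
  filter_upwards [h1.eventually h] with x hx
  simpa using hx

namespace MapData
variable {A B : ℝ} {φ : ℂ → ℂ}

lemma cont_real (h : MapData A B φ) : ContinuousOn (fun x : ℝ => φ x) (Ici 0) :=
  h.cont.comp Complex.continuous_ofReal.continuousOn (fun x hx => by simpa using hx)

lemma cont_imag (h : MapData A B φ) : ContinuousOn (fun y : ℝ => φ (y * Complex.I)) (Ici 0) :=
  h.cont.comp (by fun_prop) (fun x hx => by simpa using hx)

lemma not_Q_real (x : ℝ) : (x : ℂ) ∉ Q := fun h => by have := h.2; simp at this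
lemma not_Q_imag (y : ℝ) : (y * Complex.I : ℂ) ∉ Q := fun h => by have := h.1; simp at this
lemma not_Q_im {z : ℂ} (hz : z.im = 0) : z ∉ Q := fun h => by have := h.2; linarith
lemma not_Q_re {z : ℂ} (hz : z.re = 0) : z ∉ Q := fun h => by have := h.1; linarith

/-- On the positive real axis the image stays below the corner `iB`: on the curved arc, the
function `i (cosh B - cos φ)` has nonnegative imaginary part and its real part decreases with
the height. -/
lemma im_le_B (h : MapData A B φ) {x : ℝ} (hx : 0 ≤ x) : (φ x).im ≤ B := by
  apply le_of_forall_gt_imp_ge_of_dense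
  intro c hc
  refine level_le (u := fun x : ℝ => (φ x).im) (a := 0) (b := x) (c := c) ?_ ?_ ?_ x ⟨hx, le_rfl⟩
  · exact Complex.continuous_im.comp_continuousOn (h.cont_real.mono Icc_subset_Ici_self)
  · simp [h.zero, hc.le]
  · intro a ha hac
    have ha0 : 0 < a := by
      rcases eq_or_lt_of_le ha.1 with h1 | h1
      · rw [← h1] at hac; simp [h.zero] at hac; linarith
      · exact h1
    have hU : IsOpen {z : ℂ | 0 < z.re} := isOpen_lt continuous_const Complex.continuous_re
    have haU : (a : ℂ) ∈ {z : ℂ | 0 < z.re} := by simpa using ha0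
    have hsub : {z : ℂ | 0 < z.re} ∩ {z | 0 ≤ z.im} ⊆ {z : ℂ | 0 ≤ z.re ∧ 0 ≤ z.im} :=
      fun z hz => ⟨le_of_lt hz.1, hz.2⟩
    have hT : Tendsto φ (𝓝[{z : ℂ | 0 < z.re} ∩ {z | 0 ≤ z.im}] (a : ℂ)) (𝓝 (φ a)) :=
      (h.cont a ⟨by simpa using ha0.le, by simp⟩).mono hsub
    have hre : (φ a).re = gB B (φ a).im := by
      rcases h.bdry a (by simpa using ha0.le) (by simp) (not_Q_real a) with h1 | h1
      · have : (φ a).im = c := hac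
        linarith [h.Bpos]
      · exact h1
    have hB' : B < (φ a).im := by have : (φ a).im = c := hac; linarith
    have e1 : ∀ᶠ z in 𝓝[{z : ℂ | 0 < z.re} ∩ {z | 0 ≤ z.im}] (a : ℂ), B < (φ z).im :=
      ((Complex.continuous_im.tendsto _).comp hT).eventually_const_lt hB'
    have e2 : ∀ᶠ z in 𝓝[{z : ℂ | 0 < z.re} ∩ {z | 0 ≤ z.im}] (a : ℂ), (φ z).re < Real.pi := by
      refine ((Complex.continuous_re.tendsto _).comp hT).eventually_lt_const ?_
      rw [hre]; linarith [gB_lt B (φ a).im, Real.pi_pos]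
    have him : ∀ w : ℂ, (Complex.I * (Real.cosh B - Complex.cos w)).im
        = Real.cosh B - Real.cos w.re * Real.cosh w.im := by
      intro w
      rw [Complex.cos_eq]
      simp [← Complex.ofReal_cos, ← Complex.ofReal_sin, ← Complex.ofReal_cosh, ← Complex.ofReal_sinh]
    have hre' : ∀ w : ℂ, (Complex.I * (Real.cosh B - Complex.cos w)).re
        = - (Real.sin w.re * Real.sinh w.im) := by
      intro w
      rw [Complex.cos_eq]
      simp [← Complex.ofReal_cos, ← Complex.ofReal_sin, ← Complex.ofReal_cosh, ← Complex.ofReal_sinh]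
    have hm := mono_local (F := fun z => Complex.I * (Real.cosh B - Complex.cos (φ z))) hU haU ?_ ?_ ?_
    · have hT' : Tendsto (fun x : ℝ => (x : ℂ)) (𝓝[>] a)
          (𝓝[{z : ℂ | 0 < z.re} ∩ {z | 0 ≤ z.im}] (a : ℂ)) := by
        apply tendsto_nhdsWithin_of_tendsto_nhds_of_eventually_within
        · exact (Complex.continuous_ofReal.tendsto a).mono_left nhdsWithin_le_nhds
        · filter_upwards [self_mem_nhdsWithin] with x hx
          have : a < x := hx
          exact ⟨by simpa using ha0.trans this, by simp⟩
      have hm' := eventually_gt_of_add (p := fun x : ℝ =>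
        (Complex.I * (Real.cosh B - Complex.cos (φ a))).re ≤
          (Complex.I * (Real.cosh B - Complex.cos (φ x))).re) (hm.mono fun δ hδ => hδ.1)
      filter_upwards [hm', hT'.eventually e1, self_mem_nhdsWithin] with x hx hx1 hax
      have hx0 : 0 < x := ha0.trans hax
      simp only [hre'] at hx
      have hrx : (φ x).re = gB B (φ x).im := by
        rcases h.bdry x (by simpa using hx0.le) (by simp) (not_Q_real x) with h1 | h1
        · linarith [h.Bpos]
        · exact h1
      rw [← hac]
      change (φ x).im ≤ (φ a).im
      by_contra! hcon
      -- `sin (gB y) * sinh y` is strictly increasing in `y ≥ B`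
      have c1 := cos_gB h.Bpos hx1.le
      have c2 := cos_gB h.Bpos hB'.le
      rw [hrx, hre] at hx
      set y := (φ x).im
      set y' := (φ a).im
      have hch : Real.cosh y' < Real.cosh y := by
        rw [Real.cosh_lt_cosh, abs_of_pos (h.Bpos.trans hB'), abs_of_pos (h.Bpos.trans hx1)]
        exact hcon
      have hsh : Real.sinh y' < Real.sinh y := Real.sinh_lt_sinh.2 hcon
      have hsh' : 0 < Real.sinh y' := Real.sinh_pos_iff.2 (h.Bpos.trans hB')
      have hc1 : Real.cos (gB B y) < Real.cos (gB B y') := by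
        have p1 := Real.cosh_pos y
        have p2 := Real.cosh_pos y'
        have p3 := Real.cosh_pos B
        by_contra! hcc
        have : 0 < Real.cos (gB B y') := pos_of_mul_pos_left (c2 ▸ p3) p2.le
        nlinarith
      have hs1 : Real.sin (gB B y') < Real.sin (gB B y) := by
        have q1 := Real.sin_nonneg_of_nonneg_of_le_pi (gB_nonneg B y) (by linarith [gB_lt B y, Real.pi_pos])
        have q2 : 0 ≤ Real.cos (gB B y) := by
          apply Real.cos_nonneg_of_neg_pi_div_two_le_of_le <;> linarith [gB_lt B y, gB_nonneg B y, Real.pi_pos]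
        nlinarith [Real.sin_sq_add_cos_sq (gB B y), Real.sin_sq_add_cos_sq (gB B y')]
      have q3 := Real.sin_nonneg_of_nonneg_of_le_pi (gB_nonneg B y') (by linarith [gB_lt B y', Real.pi_pos])
      nlinarith
    · exact continuousOn_const.mul (continuousOn_const.sub
        (Complex.continuous_cos.comp_continuousOn (h.cont.mono hsub)))
    · have : DifferentiableOn ℂ φ ({z : ℂ | 0 < z.re} ∩ {z | 0 < z.im}) := h.diff
      exact (this.ccos.const_sub _).const_mul _
    · filter_upwards [e1, e2, self_mem_nhdsWithin] with z hz1 hz2 hz3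
      have hzr : 0 ≤ z.re := le_of_lt hz3.1
      have hzi : 0 ≤ z.im := hz3.2
      rw [him]
      constructor
      · intro hz0
        have hrz : (φ z).re = gB B (φ z).im := by
          rcases h.bdry z hzr hzi (not_Q_im hz0) with h1 | h1
          · linarith [h.Bpos]
          · exact h1
        rw [hrz, cos_gB h.Bpos hz1.le]; simp
      · intro hz0
        have := Real.cos_le_cos_of_nonneg_of_le_pi (gB_nonneg B (φ z).im) hz2.le (h.gB_le z hzr hzi)
        have c1 := cos_gB h.Bpos hz1.le
        nlinarith [Real.cosh_pos (φ z).im]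

end MapData

/-! ### Boundary correspondence -/

namespace MapData
variable {A B : ℝ} {φ : ℂ → ℂ}

lemma tendsto_right (h : MapData A B φ) {a : ℝ} (ha : 0 ≤ a) :
    Tendsto φ (𝓝[{z : ℂ | 0 < z.re} ∩ {z | 0 ≤ z.im}] (a : ℂ)) (𝓝 (φ a)) :=
  (h.cont a ⟨by simpa using ha, by simp⟩).mono (fun _ hz => ⟨le_of_lt hz.1, hz.2⟩)

/-- To the right of `A` the boundary values are real. -/
lemma im_eq_zero (h : MapData A B φ) {x : ℝ} (hx : A ≤ x) : (φ x).im = 0 := by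
  have hA := h.Apos
  refine le_antisymm ?_ (h.im_nonneg x (by simpa using hA.le.trans hx) (by simp))
  apply le_of_forall_gt_imp_ge_of_dense
  intro c₀ hc₀
  have hB := h.Bpos
  -- it suffices to treat levels below `B`
  set c := min c₀ (B / 2)
  have hc : 0 < c := lt_min hc₀ (by linarith)
  have hcB : c < B := (min_le_right _ _).trans_lt (by linarith)
  refine le_trans ?_ (min_le_left c₀ (B / 2))
  refine level_le (u := fun x : ℝ => (φ x).im) (a := A) (b := x) (c := c) ?_ ?_ ?_ x ⟨hx, le_rfl⟩
  · exact Complex.continuous_im.comp_continuousOn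
      (h.cont_real.mono (Icc_subset_Ici_self.trans (Ici_subset_Ici.2 hA.le)))
  · simp [h.at_A, hc.le]
  · intro a ha hac
    have ha0 : 0 < a := hA.trans_le ha.1
    have hac' : (φ a).im = c := hac
    have hU : IsOpen {z : ℂ | 0 < z.re} := isOpen_lt continuous_const Complex.continuous_re
    have hT := h.tendsto_right ha0.le
    have e1 := ((Complex.continuous_im.tendsto _).comp hT).eventually_const_lt (hac'.symm ▸ hc)
    have e2 := ((Complex.continuous_im.tendsto _).comp hT).eventually_lt_const (hac'.symm ▸ hcB)
    have hm := mono_local (F := fun z => Complex.I * φ z) hU (by simpa using ha0) ?_ ?_ ?_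
    · have hm' := eventually_gt_of_add (p := fun x : ℝ =>
        (Complex.I * φ a).re ≤ (Complex.I * φ x).re) (hm.mono fun δ hδ => hδ.1)
      filter_upwards [hm'] with x hx
      simp at hx
      exact hx.trans hac'.le
    · exact continuousOn_const.mul (h.cont.mono fun z hz => ⟨le_of_lt hz.1, hz.2⟩)
    · exact DifferentiableOn.const_mul (h.diff : DifferentiableOn ℂ φ ({z : ℂ | 0 < z.re} ∩ {z | 0 < z.im})) _
    · filter_upwards [e1, e2, self_mem_nhdsWithin] with z hz1 hz2 hz3
      have hzr : 0 ≤ z.re := le_of_lt hz3.1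
      have hzi : 0 ≤ z.im := hz3.2
      have hz1' : 0 < (φ z).im := hz1
      have hz2' : (φ z).im < B := hz2
      constructor
      · intro hz0
        rcases h.bdry z hzr hzi (not_Q_im hz0) with h1 | h1
        · exact absurd h1 hz1'.ne'
        · rw [gB_of_le hz2'.le] at h1; simpa using h1
      · intro hz0
        simpa using (gB_nonneg _ _).trans (h.gB_le z hzr hzi)

/-- Between `0` and `A` the boundary values lie on the vertical segment. -/
lemma re_eq_zero (h : MapData A B φ) {x : ℝ} (hx0 : 0 ≤ x) (hx : x ≤ A) : (φ x).re = 0 := by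
  have hA := h.Apos
  have hB := h.Bpos
  refine le_antisymm ?_ ((gB_nonneg _ _).trans (h.gB_le x (by simpa using hx0) (by simp)))
  apply le_of_forall_gt_imp_ge_of_dense
  intro c hc
  suffices H : ∀ t ∈ Icc 0 (A - x), (fun t : ℝ => (φ (A - t : ℝ)).re) t ≤ c by
    have := H (A - x) ⟨by linarith, le_rfl⟩
    simpa using this
  refine level_le ?_ ?_ ?_
  · refine Complex.continuous_re.comp_continuousOn (h.cont_real.comp (f := fun t : ℝ => A - t) (by fun_prop) ?_)
    intro t ht
    simp only [mem_Ici]; linarith [ht.2]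
  · simp [h.at_A, hc.le]
  · intro t ht hac
    set a := A - t with ha
    have ha0 : 0 < a := by
      rcases eq_or_lt_of_le (show 0 ≤ a by linarith [ht.2]) with h1 | h1
      · linarith [ht.2]
      · exact h1
    have hac' : (φ a).re = c := hac
    have hU : IsOpen {z : ℂ | 0 < z.re} := isOpen_lt continuous_const Complex.continuous_re
    have hT := h.tendsto_right ha0.le
    have e1 := ((Complex.continuous_re.tendsto _).comp hT).eventually_const_lt (hac'.symm ▸ hc)
    have hm := mono_local (F := φ) hU (by simpa using ha0) ?_ ?_ ?_
    · apply eventually_gt_of_add (p := fun t : ℝ => (φ (A - t : ℝ)).re ≤ c)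
      filter_upwards [hm] with δ hδ
      have := hδ.2
      rw [hac', ha, sub_sub] at this
      exact this
    · exact h.cont.mono fun z hz => ⟨le_of_lt hz.1, hz.2⟩
    · exact h.diff
    · filter_upwards [e1, self_mem_nhdsWithin] with z hz1 hz3
      have hzr : 0 ≤ z.re := le_of_lt hz3.1
      have hzi : 0 ≤ z.im := hz3.2
      have hz1' : 0 < (φ z).re := hz1
      constructor
      · intro hz0
        rcases h.bdry z hzr hzi (not_Q_im hz0) with h1 | h1
        · exact h1
        · have e : z = (z.re : ℂ) := by apply Complex.ext <;> simp [hz0]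
          have := h.im_le_B hzr
          rw [← e] at this
          rw [gB_of_le this] at h1
          exact absurd h1 hz1'.ne'
      · intro _
        exact h.im_nonneg z hzr hzi

/-- On the imaginary axis the height is at least `B`, so that the boundary values lie on the
curved arc. -/
lemma B_le_im (h : MapData A B φ) {y : ℝ} (hy : 0 ≤ y) : B ≤ (φ (y * Complex.I)).im := by
  have hB := h.Bpos
  apply le_of_forall_lt_imp_le_of_dense
  intro c₀ hc₀
  set c := max c₀ (B / 2)
  have hc : 0 < c := (by linarith : 0 < B / 2).trans_le (le_max_right _ _)
  have hcB : c < B := max_lt hc₀ (by linarith)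
  refine (le_max_left c₀ (B / 2)).trans ?_
  suffices H : ∀ t ∈ Icc 0 y, (fun t : ℝ => -(φ (t * Complex.I)).im) t ≤ -c by
    have := H y ⟨hy, le_rfl⟩
    simp only [neg_le_neg_iff] at this
    exact this
  refine level_le ?_ ?_ ?_
  · exact (Complex.continuous_im.comp_continuousOn (h.cont_imag.mono Icc_subset_Ici_self)).neg
  · simp [h.zero, hcB.le]
  · intro t ht hac
    have ht0 : 0 < t := by
      rcases eq_or_lt_of_le ht.1 with h1 | h1
      · rw [← h1] at hac; simp [h.zero] at hac; linarith
      · exact h1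
    have hac' : (φ (t * Complex.I)).im = c := by simpa using hac
    have hU : IsOpen {z : ℂ | z.re < 0} := isOpen_lt Complex.continuous_re continuous_const
    set F : ℂ → ℂ := fun ζ => φ (-Complex.I * ζ) with hF
    have hrot : MapsTo (fun ζ : ℂ => -Complex.I * ζ) ({z : ℂ | z.re < 0} ∩ {z | 0 ≤ z.im})
        {z : ℂ | 0 ≤ z.re ∧ 0 ≤ z.im} := by
      intro z hz
      have h1 : z.re < 0 := hz.1
      have h2 : 0 ≤ z.im := hz.2
      simp [h1.le, h2]
    have hrot' : MapsTo (fun ζ : ℂ => -Complex.I * ζ) ({z : ℂ | z.re < 0} ∩ {z | 0 < z.im}) Q := by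
      intro z hz
      have h1 : z.re < 0 := hz.1
      have h2 : 0 < z.im := hz.2
      simp [Q, h1, h2]
    have hFc : ContinuousOn F ({z : ℂ | z.re < 0} ∩ {z | 0 ≤ z.im}) :=
      h.cont.comp (by fun_prop) hrot
    have hFd : DifferentiableOn ℂ F ({z : ℂ | z.re < 0} ∩ {z | 0 < z.im}) :=
      h.diff.comp (by fun_prop) hrot'
    have hFt : ∀ s : ℝ, F (-s : ℝ) = φ (s * Complex.I) := by
      intro s; simp only [hF]; congr 1; push_cast; ring
    have hT := hFc ((-t : ℝ) : ℂ) ⟨by simpa using ht0, by simp⟩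
    have hac2 : (F (-t : ℝ)).im = c := by rw [hFt]; exact hac'
    have e1 := ((Complex.continuous_im.tendsto _).comp hT).eventually_const_lt (hac2.symm ▸ hc)
    have e2 := ((Complex.continuous_im.tendsto _).comp hT).eventually_lt_const (hac2.symm ▸ hcB)
    have hm := mono_local (F := fun z => Complex.I * F z) hU (a := -t) (by simpa using ht0) ?_ ?_ ?_
    · apply eventually_gt_of_add (p := fun t : ℝ => -(φ (t * Complex.I)).im ≤ -c)
      filter_upwards [hm] with δ hδ
      have := hδ.2
      rw [← neg_add', hFt, hFt] at this
      simp only [Complex.mul_re, Complex.I_re, Complex.I_im, zero_mul, one_mul, zero_sub, hac'] at this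
      exact this
    · exact continuousOn_const.mul hFc
    · exact hFd.const_mul _
    · filter_upwards [e1, e2, self_mem_nhdsWithin] with z hz1 hz2 hz3
      obtain ⟨hzr, hzi⟩ := hrot hz3
      have hz1' : 0 < (F z).im := hz1
      have hz2' : (F z).im < B := hz2
      constructor
      · intro hz0
        rcases h.bdry _ hzr hzi (not_Q_re (by simp [hz0])) with h1 | h1
        · exact absurd h1 hz1'.ne'
        · rw [gB_of_le hz2'.le] at h1; simpa [hF] using h1
      · intro hz0
        simpa [hF] using (gB_nonneg _ _).trans (h.gB_le _ hzr hzi)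

lemma re_imag (h : MapData A B φ) {y : ℝ} (hy : 0 ≤ y) :
    (φ (y * Complex.I)).re = gB B (φ (y * Complex.I)).im := by
  have := h.B_le_im hy
  rcases h.bdry (y * Complex.I) (by simp) (by simpa using hy) (not_Q_imag y) with h1 | h1
  · linarith [h.Bpos]
  · exact h1

end MapData

/-! ### The square root on the first quadrant -/

/-- The square root with values in the closed first quadrant, on the closed upper half-plane. -/
noncomputable def qsqrt (w : ℂ) : ℂ := ⟨√((‖w‖ + w.re) / 2), √((‖w‖ - w.re) / 2)⟩

lemma qsqrt_continuous : Continuous qsqrt := by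
  have h1 : Continuous fun w : ℂ => √((‖w‖ + w.re) / 2) := by fun_prop
  have h2 : Continuous fun w : ℂ => √((‖w‖ - w.re) / 2) := by fun_prop
  have : qsqrt = fun w : ℂ => ((√((‖w‖ + w.re) / 2) : ℝ) : ℂ) + ((√((‖w‖ - w.re) / 2) : ℝ) : ℂ) * Complex.I := by
    funext w; apply Complex.ext <;> simp [qsqrt]
  rw [this]; fun_prop

lemma qsqrt_re_nonneg (w : ℂ) : 0 ≤ (qsqrt w).re := Real.sqrt_nonneg _
lemma qsqrt_im_nonneg (w : ℂ) : 0 ≤ (qsqrt w).im := Real.sqrt_nonneg _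

lemma qsqrt_sq {w : ℂ} (hw : 0 ≤ w.im) : qsqrt w ^ 2 = w := by
  have h1 : 0 ≤ (‖w‖ + w.re) / 2 := by
    have := (abs_le.1 (Complex.abs_re_le_norm w)).1; linarith
  have h2 : 0 ≤ (‖w‖ - w.re) / 2 := by
    have := (abs_le.1 (Complex.abs_re_le_norm w)).2; linarith
  have h3 : ‖w‖ ^ 2 = w.re ^ 2 + w.im ^ 2 := by
    rw [Complex.sq_norm, Complex.normSq_apply]; ring
  apply Complex.ext
  · simp only [qsqrt, pow_two, Complex.mul_re]
    rw [Real.mul_self_sqrt h1, Real.mul_self_sqrt h2]; ring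
  · simp only [qsqrt, pow_two, Complex.mul_im]
    have : √((‖w‖ + w.re) / 2) * √((‖w‖ - w.re) / 2) = w.im / 2 := by
      rw [← Real.sqrt_mul h1, Real.sqrt_eq_iff_mul_self_eq (mul_nonneg h1 h2) (by linarith)]
      nlinarith
    linarith [mul_comm √((‖w‖ + w.re) / 2) √((‖w‖ - w.re) / 2)]

lemma qsqrt_of_sq {z : ℂ} (h1 : 0 ≤ z.re) (h2 : 0 ≤ z.im) : qsqrt (z ^ 2) = z := by
  have hn : ‖z ^ 2‖ = z.re ^ 2 + z.im ^ 2 := by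
    rw [norm_pow, Complex.sq_norm, Complex.normSq_apply]; ring
  have hr : (z ^ 2).re = z.re ^ 2 - z.im ^ 2 := by simp [pow_two]
  apply Complex.ext
  · simp only [qsqrt, hn, hr]
    rw [show (z.re ^ 2 + z.im ^ 2 + (z.re ^ 2 - z.im ^ 2)) / 2 = z.re ^ 2 by ring, Real.sqrt_sq h1]
  · simp only [qsqrt, hn, hr]
    rw [show (z.re ^ 2 + z.im ^ 2 - (z.re ^ 2 - z.im ^ 2)) / 2 = z.im ^ 2 by ring, Real.sqrt_sq h2]

lemma qsqrt_mem_Q {w : ℂ} (hw : 0 < w.im) : qsqrt w ∈ Q := by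
  have h : |w.re| < ‖w‖ := Complex.abs_re_lt_norm.2 hw.ne'
  have := abs_lt.1 h
  exact ⟨Real.sqrt_pos.2 (by linarith), Real.sqrt_pos.2 (by linarith)⟩

lemma qsqrt_ne_zero {w : ℂ} (hw : 0 < w.im) : qsqrt w ≠ 0 := fun h => by
  have := (qsqrt_mem_Q hw).1; rw [h] at this; simp at this

lemma qsqrt_differentiableAt {w : ℂ} (hw : 0 < w.im) : DifferentiableAt ℂ qsqrt w := by
  have h1 : HasDerivAt (fun z : ℂ => z ^ 2) (2 * qsqrt w) (qsqrt w) := by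
    simpa using hasDerivAt_pow 2 (qsqrt w)
  refine (HasDerivAt.of_local_left_inverse qsqrt_continuous.continuousAt h1
    (mul_ne_zero two_ne_zero (qsqrt_ne_zero hw)) ?_).differentiableAt
  have : IsOpen {z : ℂ | 0 < z.im} := isOpen_lt continuous_const Complex.continuous_im
  filter_upwards [this.mem_nhds hw] with y hy
  exact qsqrt_sq (le_of_lt hy)

lemma qsqrt_ofReal {x : ℝ} (hx : 0 ≤ x) : qsqrt x = (√x : ℝ) := by
  apply Complex.ext <;> simp [qsqrt, abs_of_nonneg hx]

lemma qsqrt_ofReal_neg {x : ℝ} (hx : x ≤ 0) : qsqrt x = (√(-x) : ℝ) * Complex.I := by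
  apply Complex.ext
  · simp [qsqrt, abs_of_nonpos hx]
  · simp only [qsqrt, Complex.norm_real, Real.norm_eq_abs, abs_of_nonpos hx, Complex.ofReal_re,
      Complex.mul_im, Complex.I_im, Complex.I_re, Complex.ofReal_im]
    rw [show (-x - x) / 2 = -x by ring]; simp

lemma norm_qsqrt_sq {w : ℂ} (hw : 0 ≤ w.im) : ‖qsqrt w‖ ^ 2 = ‖w‖ := by
  rw [← norm_pow, qsqrt_sq hw]

/-! ### The complex arctangent -/

/-- The quotient whose logarithm defines the complex arctangent. -/
noncomputable def cay (z : ℂ) : ℂ := (1 + z * Complex.I) / (1 - z * Complex.I)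

lemma arctan_eq (z : ℂ) : Complex.arctan z = -Complex.I / 2 * Complex.log (cay z) := rfl

lemma arctan_re (z : ℂ) : (Complex.arctan z).re = (cay z).arg / 2 := by
  rw [arctan_eq, show -Complex.I / 2 = ((-1 / 2 : ℝ) : ℂ) * Complex.I by push_cast; ring]
  simp [Complex.log_im]; ring

lemma cay_re (z : ℂ) : (cay z).re = (1 - ‖z‖ ^ 2) / Complex.normSq (1 - z * Complex.I) := by
  rw [cay, Complex.div_re, ← add_div, Complex.sq_norm, Complex.normSq_apply z]
  congr 1
  simp; ring

lemma cay_im (z : ℂ) : (cay z).im = 2 * z.re / Complex.normSq (1 - z * Complex.I) := by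
  rw [cay, Complex.div_im, ← sub_div]
  congr 1
  simp; ring

lemma cay_im_nonneg {z : ℂ} (hz : 0 ≤ z.re) : 0 ≤ (cay z).im := by
  rw [cay_im]; exact div_nonneg (by linarith) (Complex.normSq_nonneg _)

lemma normSq_pos_of_re {z : ℂ} (hz : z.re ≠ 0) : 0 < Complex.normSq (1 - z * Complex.I) := by
  apply Complex.normSq_pos.2
  intro h
  have := congrArg Complex.im h
  simp at this; exact hz this

lemma normSq_pos_of_norm {z : ℂ} (hz : ‖z‖ < 1) : 0 < Complex.normSq (1 - z * Complex.I) := by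
  apply Complex.normSq_pos.2
  intro h
  rw [sub_eq_zero] at h
  have := congrArg (fun w => ‖w‖) h
  simp at this; linarith

lemma cay_slit {z : ℂ} (hz : 0 < z.re ∨ ‖z‖ < 1) : cay z ∈ Complex.slitPlane := by
  rcases hz with h | h
  · right; rw [cay_im]; exact (div_pos (by linarith) (normSq_pos_of_re h.ne')).ne'
  · left; rw [cay_re]; refine div_pos ?_ (normSq_pos_of_norm h); nlinarith [norm_nonneg z]

lemma arctan_differentiableAt {z : ℂ} (hz : 0 < z.re ∨ ‖z‖ < 1) :
    DifferentiableAt ℂ Complex.arctan z := by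
  have hN : (1 : ℂ) - z * Complex.I ≠ 0 := by
    apply Complex.normSq_pos.1
    rcases hz with h | h
    exacts [normSq_pos_of_re h.ne', normSq_pos_of_norm h]
  have h1 : DifferentiableAt ℂ cay z := by
    unfold cay
    exact DifferentiableAt.div (by fun_prop) (by fun_prop) hN
  exact (h1.clog (cay_slit hz)).const_mul _

lemma arctan_re_nonneg {z : ℂ} (hz : 0 ≤ z.re) : 0 ≤ (Complex.arctan z).re := by
  rw [arctan_re]
  have := Complex.arg_nonneg_iff.2 (cay_im_nonneg hz)
  linarith

lemma arctan_re_le (z : ℂ) : (Complex.arctan z).re ≤ Real.pi / 2 := by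
  rw [arctan_re]; linarith [Complex.arg_le_pi (cay z)]

lemma arctan_re_le_of_norm_lt {z : ℂ} (hz : 0 ≤ z.re) (h1 : ‖z‖ < 1) :
    (Complex.arctan z).re ≤ z.re / (1 - ‖z‖ ^ 2) := by
  have hN := normSq_pos_of_norm h1
  have hn : 0 < 1 - ‖z‖ ^ 2 := by nlinarith [norm_nonneg z]
  have hr : 0 < (cay z).re := by rw [cay_re]; exact div_pos hn hN
  have ha := Complex.arg_nonneg_iff.2 (cay_im_nonneg hz)
  have hb := (abs_lt.1 (Complex.abs_arg_lt_pi_div_two_iff.2 (Or.inl hr))).2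
  have h2 := Real.le_tan ha hb
  rw [Complex.tan_arg, cay_re, cay_im, div_div_div_cancel_right₀ hN.ne'] at h2
  rw [arctan_re]
  have : 2 * z.re / (1 - ‖z‖ ^ 2) = 2 * (z.re / (1 - ‖z‖ ^ 2)) := by ring
  linarith

lemma arctan_re_ge_of_norm_gt {z : ℂ} (hz : 0 < z.re) (h1 : 1 < ‖z‖) :
    Real.pi / 2 - z.re / (‖z‖ ^ 2 - 1) ≤ (Complex.arctan z).re := by
  have hN := normSq_pos_of_re hz.ne'
  have hn : 0 < ‖z‖ ^ 2 - 1 := by nlinarith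
  have hr : (cay z).re < 0 := by rw [cay_re]; exact div_neg_of_neg_of_pos (by linarith) hN
  have hi : 0 < (cay z).im := by rw [cay_im]; exact div_pos (by linarith) hN
  have ha : Real.pi / 2 < (cay z).arg := by
    by_contra! hcon
    rcases Complex.arg_le_pi_div_two_iff.1 hcon with h | h <;> linarith
  have h2 := Real.le_tan (x := Real.pi - (cay z).arg) (by linarith [Complex.arg_le_pi (cay z)])
    (by linarith)
  rw [Real.tan_pi_sub, Complex.tan_arg, cay_re, cay_im, div_div_div_cancel_right₀ hN.ne'] at h2
  rw [arctan_re]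
  have : -(2 * z.re / (1 - ‖z‖ ^ 2)) = 2 * (z.re / (‖z‖ ^ 2 - 1)) := by
    rw [← div_neg, neg_sub]; ring
  linarith

lemma arctan_conj {z : ℂ} (hz : 0 < z.re) :
    Complex.arctan ((starRingEnd ℂ) z) = (starRingEnd ℂ) (Complex.arctan z) := by
  have h1 := Complex.slitPlane_arg_ne_pi (cay_slit (Or.inl hz))
  have h2 : cay ((starRingEnd ℂ) z) = (starRingEnd ℂ) (cay z)⁻¹ := by
    simp only [cay, inv_div, map_div₀, map_add, map_sub, map_mul, map_one, Complex.conj_I]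
    congr 1 <;> ring
  have h3 : (cay z)⁻¹.arg ≠ Real.pi := by
    rw [Complex.arg_inv, if_neg h1]
    intro h
    linarith [Complex.neg_pi_lt_arg (cay z), Complex.arg_nonneg_iff.2 (cay_im_nonneg hz.le), Real.pi_pos]
  rw [arctan_eq, arctan_eq, h2, Complex.log_conj _ h3, Complex.log_inv _ h1]
  simp only [map_mul, map_div₀, map_neg, Complex.conj_I, Complex.conj_ofNat]; ring

/-- The half-angle formula that turns `exp (-i arctan ξ)` into an algebraic function. -/
lemma exp_arctan {ξ : ℂ} (hξ : ξ ∈ Q) :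
    Complex.exp (-Complex.I * Complex.arctan ξ) = (1 - Complex.I * ξ) / qsqrt (ξ ^ 2 + 1) := by
  have hre := hξ.1
  have him := hξ.2
  have hw : 0 < (ξ ^ 2 + 1).im := by simp [pow_two]; positivity
  have hs := qsqrt_mem_Q hw
  have hs0 := qsqrt_ne_zero hw
  have hss := qsqrt_sq hw.le
  set s := qsqrt (ξ ^ 2 + 1) with hsdef
  set E := Complex.exp (-Complex.I * Complex.arctan ξ) with hE
  have hc0 : cay ξ ≠ 0 := Complex.slitPlane_ne_zero (cay_slit (Or.inl hre))
  have hm0 : (1 : ℂ) - ξ * Complex.I ≠ 0 := Complex.normSq_pos.1 (normSq_pos_of_re hre.ne')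
  have hp0 : (1 : ℂ) + ξ * Complex.I ≠ 0 := fun h => hc0 (by rw [cay, h, zero_div])
  have hE2 : E ^ 2 = ((1 - Complex.I * ξ) / s) ^ 2 := by
    have : E ^ 2 = (cay ξ)⁻¹ := by
      rw [hE, ← Complex.exp_nat_mul, ← Complex.exp_log hc0, ← Complex.exp_neg, arctan_eq]
      congr 1
      push_cast
      linear_combination (Complex.log (cay ξ)) * Complex.I_sq
    rw [this, cay, inv_div, div_pow, hss, div_eq_div_iff hp0 (by rw [← hss]; exact pow_ne_zero _ hs0)]
    linear_combination (ξ ^ 2 * (1 - ξ * Complex.I)) * Complex.I_sq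
  rcases sq_eq_sq_iff_eq_or_eq_neg.1 hE2 with h | h
  · exact h
  · exfalso
    have e1 : E.im ≤ 0 := by
      have ha := arctan_re_nonneg hre.le
      have hb := arctan_re_le ξ
      rw [hE, Complex.exp_im]
      apply mul_nonpos_of_nonneg_of_nonpos (Real.exp_pos _).le
      have : (-Complex.I * Complex.arctan ξ).im = -(Complex.arctan ξ).re := by simp
      rw [this, Real.sin_neg]
      have := Real.sin_nonneg_of_nonneg_of_le_pi ha (by linarith [Real.pi_pos])
      linarith
    have e2 : ((1 - Complex.I * ξ) / s).im < 0 := by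
      rw [Complex.div_im, ← sub_div]
      apply div_neg_of_neg_of_pos _ (Complex.normSq_pos.2 hs0)
      simp
      nlinarith [mul_pos hre hs.1, mul_pos him hs.2, hs.2]
    rw [h, Complex.neg_im] at e1
    linarith

/-! ### The deviation and its barriers -/

lemma QuadData.sub {H G : ℂ → ℂ} (h : QuadData H) (g : QuadData G) :
    QuadData (fun z => H z - G z) :=
  ⟨h.cont.sub g.cont, h.diff.sub g.diff, fun x hx => by simp [h.real x hx, g.real x hx]⟩

lemma QuadData.const (c : ℝ) : QuadData (fun _ => (c : ℂ)) :=
  ⟨continuousOn_const, differentiableOn_const _, fun x _ => by simp⟩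

lemma qsqrt_arg_im {ξ : ℂ} (h1 : 0 ≤ ξ.re) (h2 : 0 ≤ ξ.im) : 0 ≤ (ξ ^ 2 + 1).im := by
  simp [pow_two]; positivity

lemma qsqrt_arg_im_pos {ξ : ℂ} (h : ξ ∈ Q) : 0 < (ξ ^ 2 + 1).im := by
  have := h.1; have := h.2
  simp [pow_two]; positivity

namespace MapData
variable {A B : ℝ} {φ : ℂ → ℂ}

/-- The map in the coordinate `ξ` with `z² = A² (ξ² + 1)`, in which `z = A` corresponds to `ξ = 0`
and the tip `z = 0` to `ξ = i`. -/
noncomputable def theta (A : ℝ) (φ : ℂ → ℂ) (ξ : ℂ) : ℂ := φ (A * qsqrt (ξ ^ 2 + 1))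

/-- The deviation of `theta` from its leading behaviour `A ξ`; its limit as `A → ∞` is
`arctan ξ`. -/
noncomputable def dev (A : ℝ) (φ : ℂ → ℂ) (ξ : ℂ) : ℂ := theta A φ ξ - A * ξ

lemma mul_mem_closed (hA : 0 < A) (w : ℂ) :
    0 ≤ ((A : ℂ) * qsqrt w).re ∧ 0 ≤ ((A : ℂ) * qsqrt w).im := by
  have := qsqrt_re_nonneg w
  have := qsqrt_im_nonneg w
  simp; constructor <;> positivity

lemma theta_cont (h : MapData A B φ) :
    ContinuousOn (theta A φ) {z : ℂ | 0 ≤ z.re ∧ 0 ≤ z.im} := by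
  refine h.cont.comp (f := fun ξ : ℂ => (A : ℂ) * qsqrt (ξ ^ 2 + 1)) ?_ ?_
  · have := qsqrt_continuous
    fun_prop
  · intro ξ _
    exact mul_mem_closed h.Apos _

lemma mul_mem_Q (hA : 0 < A) {w : ℂ} (hw : w ∈ Q) : (A : ℂ) * w ∈ Q := by
  have := hw.1; have := hw.2
  constructor <;> simp <;> positivity

lemma theta_diff (h : MapData A B φ) : DifferentiableOn ℂ (theta A φ) Q := by
  refine h.diff.comp (f := fun ξ : ℂ => (A : ℂ) * qsqrt (ξ ^ 2 + 1)) ?_ ?_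
  · intro ξ hξ
    have h1 : DifferentiableAt ℂ (fun ξ : ℂ => qsqrt (ξ ^ 2 + 1)) ξ :=
      (qsqrt_differentiableAt (qsqrt_arg_im_pos hξ)).comp ξ (f := fun ξ : ℂ => ξ ^ 2 + 1) (by fun_prop)
    exact (h1.const_mul _).differentiableWithinAt
  · intro ξ hξ
    exact mul_mem_Q h.Apos (qsqrt_mem_Q (qsqrt_arg_im_pos hξ))

lemma theta_real (h : MapData A B φ) {x : ℝ} (_hx : 0 ≤ x) : (theta A φ x).im = 0 := by
  unfold theta
  have e : ((x : ℂ) ^ 2 + 1) = ((x ^ 2 + 1 : ℝ) : ℂ) := by push_cast; ring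
  rw [e, qsqrt_ofReal (by positivity), ← Complex.ofReal_mul]
  apply h.im_eq_zero
  have : 1 ≤ √(x ^ 2 + 1) := Real.one_le_sqrt.2 (by nlinarith)
  nlinarith [h.Apos]

lemma theta_seg (h : MapData A B φ) {t : ℝ} (ht : 0 ≤ t) (ht1 : t ≤ 1) :
    (theta A φ (t * Complex.I)).re = 0 ∧ (theta A φ (t * Complex.I)).im ≤ B := by
  unfold theta
  have e : ((t * Complex.I : ℂ) ^ 2 + 1) = ((1 - t ^ 2 : ℝ) : ℂ) := by
    push_cast; rw [mul_pow, Complex.I_sq]; ring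
  have h1 : 0 ≤ 1 - t ^ 2 := by nlinarith
  rw [e, qsqrt_ofReal h1, ← Complex.ofReal_mul]
  have h2 : √(1 - t ^ 2) ≤ 1 := Real.sqrt_le_one.2 (by nlinarith)
  have hA := h.Apos
  exact ⟨h.re_eq_zero (by positivity) (by nlinarith), h.im_le_B (by positivity)⟩

lemma theta_imag (h : MapData A B φ) {t : ℝ} (ht : 0 ≤ t) :
    (theta A φ (t * Complex.I)).re = gB B (theta A φ (t * Complex.I)).im := by
  rcases le_total t 1 with ht1 | ht1
  · obtain ⟨h1, h2⟩ := h.theta_seg ht ht1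
    rw [h1, gB_of_le h2]
  · unfold theta
    have e : ((t * Complex.I : ℂ) ^ 2 + 1) = ((1 - t ^ 2 : ℝ) : ℂ) := by
      push_cast; rw [mul_pow, Complex.I_sq]; ring
    rw [e, qsqrt_ofReal_neg (by nlinarith), ← mul_assoc, ← Complex.ofReal_mul]
    have hA := h.Apos
    exact h.re_imag (by positivity)

lemma theta_mem (h : MapData A B φ) (ξ : ℂ) :
    0 ≤ (theta A φ ξ).im ∧ gB B (theta A φ ξ).im ≤ (theta A φ ξ).re := by
  obtain ⟨h1, h2⟩ := mul_mem_closed h.Apos (ξ ^ 2 + 1)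
  exact ⟨h.im_nonneg _ h1 h2, h.gB_le _ h1 h2⟩

lemma theta_re_nonneg (h : MapData A B φ) (ξ : ℂ) : 0 ≤ (theta A φ ξ).re :=
  (gB_nonneg _ _).trans (h.theta_mem ξ).2

lemma dev_quad (h : MapData A B φ) : QuadData (dev A φ) :=
  ⟨h.theta_cont.sub (by fun_prop), h.theta_diff.sub (by fun_prop), fun x hx => by
    simp [dev, h.theta_real hx]⟩

lemma dev_imag_re (t : ℝ) : (dev A φ (t * Complex.I)).re = (theta A φ (t * Complex.I)).re := by
  simp [dev]

/-- Since `√(ξ² + 1) - ξ` is bounded, the normalization of `φ` at infinity gives sublinear growth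
of the deviation. -/
lemma dev_growth (h : MapData A B φ) {ε : ℝ} (hε : 0 < ε) :
    ∃ R : ℝ, ∀ ξ : ℂ, 0 ≤ ξ.re → 0 ≤ ξ.im → R ≤ ‖ξ‖ → ‖dev A φ ξ‖ ≤ ε * ‖ξ‖ := by
  have hA := h.Apos
  obtain ⟨R, hR⟩ := h.growth (ε / (4 * A)) (by positivity)
  refine ⟨max (max (R / A + 1) (2 * A / ε)) 1, ?_⟩
  intro ξ h1 h2 h3
  have r1 : R / A + 1 ≤ ‖ξ‖ := (le_max_left _ _).trans ((le_max_left _ _).trans h3)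
  have r2 : 2 * A / ε ≤ ‖ξ‖ := (le_max_right _ _).trans ((le_max_left _ _).trans h3)
  have r3 : 1 ≤ ‖ξ‖ := (le_max_right _ _).trans h3
  set s := qsqrt (ξ ^ 2 + 1) with hs
  have hss : s ^ 2 = ξ ^ 2 + 1 := qsqrt_sq (qsqrt_arg_im h1 h2)
  have hs1 : 0 ≤ s.re := qsqrt_re_nonneg _
  have hs2 : 0 ≤ s.im := qsqrt_im_nonneg _
  have hsum : ‖ξ‖ ≤ ‖s + ξ‖ := by
    apply le_of_sq_le_sq _ (norm_nonneg _)
    rw [Complex.sq_norm, Complex.sq_norm, Complex.normSq_apply, Complex.normSq_apply]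
    simp
    nlinarith [mul_nonneg hs1 h1, mul_nonneg hs2 h2]
  have hdiff : ‖s - ξ‖ ≤ 1 := by
    have : ‖s - ξ‖ * ‖s + ξ‖ = 1 := by
      rw [← norm_mul, show (s - ξ) * (s + ξ) = s ^ 2 - ξ ^ 2 by ring, hss]; simp
    nlinarith [norm_nonneg (s - ξ)]
  have n1 : ‖s‖ ≤ ‖ξ‖ + 1 := by
    have := norm_add_le (s - ξ) ξ
    rw [sub_add_cancel] at this; linarith
  have n2 : ‖ξ‖ - 1 ≤ ‖s‖ := by
    have := norm_sub_le s (s - ξ)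
    rw [sub_sub_cancel] at this; linarith
  obtain ⟨m1, m2⟩ := mul_mem_closed hA (ξ ^ 2 + 1)
  have hn : ‖(A : ℂ) * s‖ = A * ‖s‖ := by rw [norm_mul, Complex.norm_real, Real.norm_of_nonneg hA.le]
  have hg := hR _ m1 m2 (by
    rw [← hs, hn]
    have : R / A ≤ ‖s‖ := by linarith
    rw [div_le_iff₀ hA] at this; linarith)
  rw [← hs, hn] at hg
  have e : dev A φ ξ = (φ (A * s) - A * s) + A * (s - ξ) := by
    simp only [dev, theta, ← hs]; ring
  have e2 : ε / (4 * A) * (A * ‖s‖) = ε / 4 * ‖s‖ := by field_simp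
  rw [e2] at hg
  rw [div_le_iff₀ hε] at r2
  calc ‖dev A φ ξ‖ ≤ ‖φ (A * s) - A * s‖ + ‖(A : ℂ) * (s - ξ)‖ := by rw [e]; exact norm_add_le _ _
    _ ≤ ε / 4 * ‖s‖ + A * 1 := by
        rw [norm_mul, Complex.norm_real, Real.norm_of_nonneg hA.le]; gcongr
    _ ≤ ε / 4 * (2 * ‖ξ‖) + ε * ‖ξ‖ / 2 := by
        gcongr
        · linarith
        · linarith
    _ = ε * ‖ξ‖ := by ring

lemma dev_re_nonneg (h : MapData A B φ) {ξ : ℂ} (h1 : 0 ≤ ξ.re) (h2 : 0 ≤ ξ.im) :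
    0 ≤ (dev A φ ξ).re := by
  have := ((QuadData.const 0).sub h.dev_quad).re_nonpos ?_ ?_ h1 h2
  · simpa using this
  · intro y _
    have := dev_imag_re (A := A) (φ := φ) y
    simp only [Complex.ofReal_zero, zero_sub, Complex.neg_re, this]
    linarith [h.theta_re_nonneg (y * Complex.I)]
  · intro ε hε
    obtain ⟨R, hR⟩ := h.dev_growth hε
    refine ⟨R, fun z hz1 hz2 hz3 => ?_⟩
    have := hR z hz1 hz2 hz3
    have h3 := (abs_le.1 (Complex.abs_re_le_norm (dev A φ z))).1
    simp
    linarith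

lemma dev_re_le (h : MapData A B φ) {ξ : ℂ} (h1 : 0 ≤ ξ.re) (h2 : 0 ≤ ξ.im) :
    (dev A φ ξ).re ≤ Real.pi / 2 := by
  have := (h.dev_quad.sub (QuadData.const (Real.pi / 2))).re_nonpos ?_ ?_ h1 h2
  · simp at this; linarith
  · intro y hy
    have := dev_imag_re (A := A) (φ := φ) y
    simp only [Complex.sub_re, Complex.ofReal_re, this, h.theta_imag hy]
    linarith [gB_lt B (theta A φ (y * Complex.I)).im]
  · intro ε hε
    obtain ⟨R, hR⟩ := h.dev_growth hε
    refine ⟨R, fun z hz1 hz2 hz3 => ?_⟩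
    have := hR z hz1 hz2 hz3
    have h3 := (abs_le.1 (Complex.abs_re_le_norm (dev A φ z))).2
    simp only [Complex.sub_re, Complex.ofReal_re]
    linarith [Real.pi_pos]

lemma arctan_real_im (x : ℝ) : (Complex.arctan x).im = 0 := by
  rw [← Complex.ofReal_arctan, Complex.ofReal_im]

/-- The upper barrier: `arctan` is the harmonic function with boundary values `0` on `(0, i)` and
`π / 2` on `(i, i∞)`; a small shift keeps the barrier away from its singularity at `i`. -/
lemma dev_re_le_shift (h : MapData A B φ) {δ : ℝ} (hδ : 0 < δ) (hδ1 : δ < 1) {ξ : ℂ}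
    (h1 : 0 ≤ ξ.re) (h2 : 0 ≤ ξ.im) :
    (dev A φ ξ).re ≤ (Complex.arctan ((ξ + (δ ^ 2 : ℝ)) / (1 - δ : ℝ))).re + δ / 2 := by
  have hd : 0 < 1 - δ := by linarith
  have hre : ∀ z : ℂ, ((z + (δ ^ 2 : ℝ)) / (1 - δ : ℝ)).re = (z.re + δ ^ 2) / (1 - δ) := by
    intro z; rw [Complex.div_ofReal_re]; simp [-Complex.ofReal_pow]
  have him : ∀ z : ℂ, ((z + (δ ^ 2 : ℝ)) / (1 - δ : ℝ)).im = z.im / (1 - δ) := by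
    intro z; rw [Complex.div_ofReal_im]; simp [-Complex.ofReal_pow]
  have hpos : ∀ z : ℂ, 0 ≤ z.re → 0 < ((z + (δ ^ 2 : ℝ)) / (1 - δ : ℝ)).re := by
    intro z hz; rw [hre]; positivity
  have hdiff : ∀ z : ℂ, 0 ≤ z.re → DifferentiableAt ℂ
      (fun z : ℂ => Complex.arctan ((z + (δ ^ 2 : ℝ)) / (1 - δ : ℝ))) z := by
    intro z hz
    exact (arctan_differentiableAt (Or.inl (hpos z hz))).comp z
      (f := fun z : ℂ => (z + (δ ^ 2 : ℝ)) / (1 - δ : ℝ)) (by fun_prop)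
  have hQ : QuadData (fun z : ℂ => Complex.arctan ((z + (δ ^ 2 : ℝ)) / (1 - δ : ℝ))) := by
    refine ⟨fun z hz => (hdiff z hz.1).continuousAt.continuousWithinAt,
      fun z hz => (hdiff z hz.1.le).differentiableWithinAt, fun x _ => ?_⟩
    rw [← Complex.ofReal_add, ← Complex.ofReal_div]
    exact arctan_real_im _
  have := ((h.dev_quad.sub hQ).sub (QuadData.const (δ / 2))).re_nonpos ?_ ?_ h1 h2
  · simp only [Complex.sub_re, Complex.ofReal_re] at this
    linarith
  · intro y hy
    have e := dev_imag_re (A := A) (φ := φ) y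
    simp only [Complex.sub_re, Complex.ofReal_re, e]
    rcases le_total y 1 with hy1 | hy1
    · rw [(h.theta_seg hy hy1).1]
      have := arctan_re_nonneg (hpos (y * Complex.I) (by simp)).le
      linarith
    · have hle : (theta A φ (y * Complex.I)).re ≤ Real.pi / 2 := by
        rw [h.theta_imag hy]; exact (gB_lt _ _).le
      set z := (y * Complex.I + (δ ^ 2 : ℝ)) / ((1 - δ : ℝ) : ℂ) with hz
      have zr : z.re = δ ^ 2 / (1 - δ) := by rw [hz, hre]; simp
      have zi : z.im = y / (1 - δ) := by rw [hz, him]; simp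
      have z1 : 1 / (1 - δ) ≤ z.im := by rw [zi]; gcongr
      have z2 : 1 < 1 / (1 - δ) := by rw [lt_div_iff₀ hd]; linarith
      have zn : ‖z‖ ^ 2 = z.re ^ 2 + z.im ^ 2 := by rw [Complex.sq_norm, Complex.normSq_apply]; ring
      have z3 : (1 / (1 - δ)) ^ 2 - 1 ≤ ‖z‖ ^ 2 - 1 := by
        rw [zn]; nlinarith [sq_nonneg z.re]
      have z4 : 1 < ‖z‖ := by
        apply lt_of_pow_lt_pow_left₀ 2 (norm_nonneg _)
        nlinarith
      have z5 := arctan_re_ge_of_norm_gt (by rw [zr]; positivity) z4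
      have z6 : z.re / (‖z‖ ^ 2 - 1) ≤ δ / 2 := by
        rw [div_le_iff₀ (by nlinarith)]
        have : δ / 2 * ((1 / (1 - δ)) ^ 2 - 1) ≤ δ / 2 * (‖z‖ ^ 2 - 1) := by gcongr
        refine le_trans ?_ this
        rw [zr]
        have : δ / 2 * ((1 / (1 - δ)) ^ 2 - 1) - δ ^ 2 / (1 - δ) = δ ^ 3 / (2 * (1 - δ) ^ 2) := by
          field_simp; ring
        have : 0 ≤ δ ^ 3 / (2 * (1 - δ) ^ 2) := by positivity
        linarith
      linarith
  · intro ε hε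
    obtain ⟨R, hR⟩ := h.dev_growth hε
    refine ⟨R, fun z hz1 hz2 hz3 => ?_⟩
    have := hR z hz1 hz2 hz3
    have h3 := (abs_le.1 (Complex.abs_re_le_norm (dev A φ z))).2
    have h4 := arctan_re_nonneg (hpos z hz1).le
    simp only [Complex.sub_re, Complex.ofReal_re]
    linarith

/-- The limit `δ → 0` of the shifted barrier. -/
lemma dev_re_le_arctan (h : MapData A B φ) {ξ : ℂ} (h1 : 0 < ξ.re) (h2 : 0 ≤ ξ.im) :
    (dev A φ ξ).re ≤ (Complex.arctan ξ).re := by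
  have hc : Tendsto (fun δ : ℝ => (Complex.arctan ((ξ + (δ ^ 2 : ℝ)) / (1 - δ : ℝ))).re + δ / 2)
      (𝓝[>] 0) (𝓝 (Complex.arctan ξ).re) := by
    have e : (ξ + ((0 : ℝ) ^ 2 : ℝ)) / ((1 - (0 : ℝ) : ℝ) : ℂ) = ξ := by simp
    have c1 : ContinuousAt (fun δ : ℝ => (ξ + (δ ^ 2 : ℝ)) / ((1 - δ : ℝ) : ℂ)) 0 := by
      apply ContinuousAt.div
      · fun_prop
      · fun_prop
      · simp
    have c2 : ContinuousAt (fun δ : ℝ => Complex.arctan ((ξ + (δ ^ 2 : ℝ)) / ((1 - δ : ℝ) : ℂ))) 0 := by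
      apply ContinuousAt.comp (g := Complex.arctan) _ c1
      rw [e]; exact (arctan_differentiableAt (Or.inl h1)).continuousAt
    have c3 : ContinuousAt (fun δ : ℝ =>
        (Complex.arctan ((ξ + (δ ^ 2 : ℝ)) / ((1 - δ : ℝ) : ℂ))).re + δ / 2) 0 :=
      (Complex.continuous_re.continuousAt.comp c2).add (by fun_prop)
    have := c3.tendsto.mono_left (nhdsWithin_le_nhds (s := Ioi 0))
    simpa using this
  refine ge_of_tendsto hc ?_
  filter_upwards [Ioo_mem_nhdsGT one_pos] with δ hδ
  exact h.dev_re_le_shift hδ.1 hδ.2 h1.le h2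

/-- The lower barrier: on the curved arc the height `C₀` above the corner already makes the
boundary value close to `π / 2`, and below that height the denominator `B + C₀ + 2` makes
`Re arctan (θ / (B + C₀ + 2)) ≤ Re θ`. -/
lemma dev_re_ge (h : MapData A B φ) {ε C₀ : ℝ} (hε : 0 < ε) (hC : 1 ≤ C₀)
    (hC₀ : Real.pi / 2 - ε ≤ Real.arccos (1 / Real.cosh C₀)) {ξ : ℂ}
    (h1 : 0 ≤ ξ.re) (h2 : 0 ≤ ξ.im) :
    (Complex.arctan (theta A φ ξ / (B + C₀ + 2 : ℝ))).re - ε ≤ (dev A φ ξ).re := by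
  have hB := h.Bpos
  set D := B + C₀ + 2 with hD
  have hD0 : 0 < D := by linarith
  have hnorm : ∀ z : ℂ, ‖z / (D : ℂ)‖ ^ 2 = (z.re ^ 2 + z.im ^ 2) / D ^ 2 := by
    intro z
    rw [norm_div, div_pow, Complex.norm_real, Real.norm_eq_abs, sq_abs, Complex.sq_norm, Complex.normSq_apply]
    ring
  have hok : ∀ z : ℂ, 0 < (theta A φ z / (D : ℂ)).re ∨ ‖theta A φ z / (D : ℂ)‖ < 1 := by
    intro z
    obtain ⟨i1, i2⟩ := h.theta_mem z
    rcases eq_or_lt_of_le (h.theta_re_nonneg z) with h0 | h0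
    · right
      have hle : (theta A φ z).im ≤ B := by
        by_contra! hcon
        have c := cos_gB hB hcon.le
        have : gB B (theta A φ z).im = 0 := le_antisymm (h0 ▸ i2) (gB_nonneg _ _)
        rw [this, Real.cos_zero, one_mul] at c
        have := Real.cosh_lt_cosh.2 (show |B| < |(theta A φ z).im| by
          rwa [abs_of_pos hB, abs_of_pos (hB.trans hcon)])
        linarith
      apply lt_of_pow_lt_pow_left₀ 2 zero_le_one
      rw [hnorm, ← h0, div_lt_iff₀ (by positivity)]
      nlinarith
    · left
      rw [Complex.div_ofReal_re]; positivity
  have hre0 : ∀ z : ℂ, 0 ≤ (theta A φ z / (D : ℂ)).re := by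
    intro z; rw [Complex.div_ofReal_re]; exact div_nonneg (h.theta_re_nonneg z) hD0.le
  have hQ : QuadData (fun z : ℂ => Complex.arctan (theta A φ z / (D : ℂ))) := by
    refine ⟨fun z hz => ?_, fun z hz => ?_, fun x hx => ?_⟩
    · exact ContinuousAt.comp_continuousWithinAt (g := Complex.arctan)
        (arctan_differentiableAt (hok z)).continuousAt
        ((h.theta_cont.div_const _) z hz)
    · exact DifferentiableAt.comp_differentiableWithinAt (g := Complex.arctan) z
        (arctan_differentiableAt (hok z)) ((h.theta_diff.div_const _) z hz)
    · have : theta A φ x = ((theta A φ x).re : ℂ) := by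
        apply Complex.ext <;> simp [h.theta_real hx]
      rw [this, ← Complex.ofReal_div]
      exact arctan_real_im _
  have := ((hQ.sub h.dev_quad).sub (QuadData.const ε)).re_nonpos ?_ ?_ h1 h2
  · simp only [Complex.sub_re, Complex.ofReal_re] at this
    linarith
  · intro y hy
    have e := dev_imag_re (A := A) (φ := φ) y
    simp only [Complex.sub_re, Complex.ofReal_re, e]
    have hx := h.theta_imag hy
    have hxl := gB_lt B (theta A φ (y * Complex.I)).im
    rw [← hx] at hxl
    have hx0 := h.theta_re_nonneg (y * Complex.I)
    have hi0 := (h.theta_mem (y * Complex.I)).1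
    have hr0 := hre0 (y * Complex.I)
    have hN := hnorm (theta A φ (y * Complex.I))
    set w := theta A φ (y * Complex.I)
    rcases le_total w.im (B + C₀) with hw | hw
    · have hpi : Real.pi / 2 < 1.6 := by linarith [Real.pi_lt_d2]
      have hb : D ≤ D ^ 2 - (w.re ^ 2 + w.im ^ 2) := by
        have t1 : w.re ^ 2 ≤ 1.6 ^ 2 := by gcongr; linarith
        have t2 : w.im ^ 2 ≤ (B + C₀) ^ 2 := by gcongr
        nlinarith
      have hlt : ‖w / (D : ℂ)‖ < 1 := by
        apply lt_of_pow_lt_pow_left₀ 2 zero_le_one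
        rw [hN, div_lt_iff₀ (by positivity)]
        linarith
      have := arctan_re_le_of_norm_lt hr0 hlt
      have hle : (w / (D : ℂ)).re / (1 - ‖w / (D : ℂ)‖ ^ 2) ≤ w.re := by
        rw [hN, Complex.div_ofReal_re]
        have e1 : w.re / D / (1 - (w.re ^ 2 + w.im ^ 2) / D ^ 2)
            = w.re * (D / (D ^ 2 - (w.re ^ 2 + w.im ^ 2))) := by
          have : D ^ 2 - (w.re ^ 2 + w.im ^ 2) ≠ 0 := by linarith
          have : 1 - (w.re ^ 2 + w.im ^ 2) / D ^ 2 = (D ^ 2 - (w.re ^ 2 + w.im ^ 2)) / D ^ 2 := by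
            field_simp
          rw [this]
          field_simp
        rw [e1]
        have : D / (D ^ 2 - (w.re ^ 2 + w.im ^ 2)) ≤ 1 := by
          rw [div_le_one (by linarith)]; exact hb
        nlinarith
      linarith
    · have hge : Real.pi / 2 - ε ≤ w.re := by
        rw [hx]
        refine hC₀.trans ?_
        rw [gB_eq, max_eq_left (by linarith)]
        apply Real.arccos_le_arccos
        rw [div_le_div_iff₀ (Real.cosh_pos _) (Real.cosh_pos _), one_mul]
        have m1 : Real.cosh (B + C₀) ≤ Real.cosh w.im := by
          rw [Real.cosh_le_cosh, abs_of_pos (by linarith), abs_of_pos (by linarith)]; exact hw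
        refine le_trans ?_ m1
        rw [Real.cosh_add]
        have := Real.sinh_pos_iff.2 hB
        have := Real.sinh_pos_iff.2 (show 0 < C₀ by linarith)
        have : 0 ≤ Real.sinh B * Real.sinh C₀ := by positivity
        linarith
      have := arctan_re_le (w / (D : ℂ))
      linarith
  · intro η hη
    refine ⟨Real.pi / 2 / η, fun z hz1 hz2 hz3 => ?_⟩
    have h3 := h.dev_re_nonneg hz1 hz2
    have h4 := arctan_re_le (theta A φ z / (D : ℂ))
    rw [div_le_iff₀ hη] at hz3
    simp only [Complex.sub_re, Complex.ofReal_re]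
    linarith

end MapData

/-! ### Convergence of the deviation -/

namespace MapData
variable {A B : ℝ} {φ : ℂ → ℂ}

lemma dev_reflect_re (h : MapData A B φ) {ξ : ℂ} (h1 : 0 ≤ ξ.re) :
    0 ≤ (reflectC (dev A φ) ξ).re ∧ (reflectC (dev A φ) ξ).re ≤ Real.pi / 2 := by
  rw [reflectC_re]
  exact ⟨h.dev_re_nonneg h1 (abs_nonneg _), h.dev_re_le h1 (abs_nonneg _)⟩

/-- A bound for `|exp (-i dev)|`, uniform in `A`: since `0 ≤ Re dev ≤ π / 2`, the function
`exp (-i (dev - π / 4))` has nonnegative real part and Harnack's inequality applies. -/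
lemma exp_dev_im_le (h : MapData A B φ) {ξ : ℂ} (h1 : 0 < ξ.re) (h2 : 0 ≤ ξ.im) :
    Real.exp (dev A φ ξ).im ≤ ‖ξ + 1‖ ^ 2 / ξ.re := by
  have hn : ∀ z : ℂ, ‖Complex.exp (-Complex.I * (reflectC (dev A φ) z - (Real.pi / 4 : ℝ)))‖
      = Real.exp (reflectC (dev A φ) z).im := by
    intro z; rw [Complex.norm_exp]; simp
  have key := harnack_rhp
    (g := fun z => Complex.exp (-Complex.I * (reflectC (dev A φ) z - (Real.pi / 4 : ℝ)))) ?_ ?_ h1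
  · rw [hn, hn, reflectC_of_nonneg h2, reflectC_of_nonneg (by simp)] at key
    have : (dev A φ 1).im = 0 := by simpa using h.dev_quad.real 1 zero_le_one
    rw [this, Real.exp_zero, one_mul] at key
    exact key
  · exact ((h.dev_quad.diffContOnCl.1.sub_const _).const_mul _).cexp
  · intro z hz
    rw [Complex.exp_re]
    apply mul_nonneg (Real.exp_pos _).le
    obtain ⟨r1, r2⟩ := h.dev_reflect_re hz.le
    apply Real.cos_nonneg_of_neg_pi_div_two_le_of_le <;> simp <;> linarith [Real.pi_pos]

/-- Harnack's inequality for `arctan - dev`, whose real part is nonnegative: the distance between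
the two functions is controlled by its value at `1`. -/
lemma dev_sub_arctan_le (h : MapData A B φ) {ξ : ℂ} (h1 : 0 < ξ.re) (h2 : 0 ≤ ξ.im) :
    ‖Complex.arctan ξ - dev A φ ξ‖ ≤ (Real.pi / 4 - (dev A φ 1).re) * (‖ξ + 1‖ ^ 2 / ξ.re) := by
  have key := harnack_rhp (g := fun z => Complex.arctan z - reflectC (dev A φ) z) ?_ ?_ h1
  · rw [reflectC_of_nonneg h2, reflectC_of_nonneg (by simp)] at key
    have e : Complex.arctan 1 = (Real.pi / 4 : ℝ) := by
      rw [← Real.arctan_one, Complex.ofReal_arctan, Complex.ofReal_one]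
    have e1 : dev A φ 1 = ((dev A φ 1).re : ℂ) := by
      have : (dev A φ 1).im = 0 := by simpa using h.dev_quad.real 1 zero_le_one
      apply Complex.ext <;> simp [this]
    have e2 : ‖Complex.arctan 1 - dev A φ 1‖ = Real.pi / 4 - (dev A φ 1).re := by
      have hle := h.dev_re_le_arctan (ξ := 1) (by simp) (by simp)
      rw [e, Complex.ofReal_re] at hle
      rw [e, e1, ← Complex.ofReal_sub, Complex.norm_real, Real.norm_of_nonneg]
      · rw [Complex.ofReal_re]
      · linarith
    rw [e2] at key
    exact key
  · intro z hz
    exact ((arctan_differentiableAt (Or.inl hz)).differentiableWithinAt).sub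
      (h.dev_quad.diffContOnCl.1 z hz)
  · intro z hz
    rw [Complex.sub_re]
    rcases le_or_gt 0 z.im with hi | hi
    · rw [reflectC_of_nonneg hi]
      linarith [h.dev_re_le_arctan hz hi]
    · rw [reflectC_of_neg hi, Complex.conj_re]
      have := h.dev_re_le_arctan (ξ := (starRingEnd ℂ) z) (by simpa using hz) (by simpa using hi.le)
      rw [arctan_conj hz, Complex.conj_re] at this
      linarith

lemma dev_one_ge (h : MapData A B φ) {ε C₀ : ℝ} (hε : 0 < ε) (hC : 1 ≤ C₀)
    (hC₀ : Real.pi / 2 - ε ≤ Real.arccos (1 / Real.cosh C₀)) :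
    Real.arctan (A / (B + C₀ + 2)) - ε ≤ (dev A φ 1).re := by
  have hB := h.Bpos
  refine le_trans ?_ (h.dev_re_ge hε hC hC₀ (ξ := 1) (by simp) (by simp))
  have hi : (theta A φ 1).im = 0 := by simpa using h.theta_real zero_le_one
  have e1 : theta A φ 1 = ((theta A φ 1).re : ℂ) := by apply Complex.ext <;> simp [hi]
  have e2 : A ≤ (theta A φ 1).re := by
    have := h.dev_re_nonneg (ξ := 1) (by simp) (by simp)
    simp [dev] at this; exact this
  rw [e1, ← Complex.ofReal_div, ← Complex.ofReal_arctan, Complex.ofReal_re]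
  gcongr

end MapData

open MapData in
/-- If `B(A) ≤ (1 + o(1)) A`, then the deviation tends to `arctan`. -/
lemma tendsto_dev {B : ℝ → ℝ} {φ : ℝ → ℂ → ℂ} (h : ∀ A > (0 : ℝ), MapData A (B A) (φ A))
    (hlim : ∀ η > (0 : ℝ), ∀ᶠ A in atTop, B A ≤ (1 + η) * A) {ξ : ℂ} (h1 : 0 < ξ.re)
    (h2 : 0 ≤ ξ.im) :
    Tendsto (fun A => dev A (φ A) ξ) atTop (𝓝 (Complex.arctan ξ)) := by
  have hone : Tendsto (fun A => Real.pi / 4 - (dev A (φ A) 1).re) atTop (𝓝 0) := by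
    have hlow : ∀ A > (0 : ℝ), 0 ≤ Real.pi / 4 - (dev A (φ A) 1).re := by
      intro A hA
      have := (h A hA).dev_re_le_arctan (ξ := 1) (by simp) (by simp)
      rw [← Complex.ofReal_one, ← Complex.ofReal_arctan, Complex.ofReal_re, Real.arctan_one] at this
      rw [Complex.ofReal_one] at this
      linarith
    rw [Metric.tendsto_nhds]
    intro ε hε
    -- choice of the height at which the arc is close to its asymptote
    have hC : ∃ C₀ : ℝ, 1 ≤ C₀ ∧ Real.pi / 2 - ε / 2 ≤ Real.arccos (1 / Real.cosh C₀) := by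
      have t1 : Tendsto (fun C : ℝ => 1 / Real.cosh C) atTop (𝓝 0) := by
        simp only [one_div]
        apply tendsto_inv_atTop_zero.comp
        refine tendsto_atTop_mono (fun x => ?_) ((Real.tendsto_exp_atTop).atTop_div_const two_pos)
        rw [Real.cosh_eq]; linarith [Real.exp_pos (-x)]
      have t2 := (Real.continuous_arccos.tendsto 0).comp t1
      rw [Real.arccos_zero] at t2
      have t3 := t2.eventually_const_le (show Real.pi / 2 - ε / 2 < Real.pi / 2 by linarith)
      obtain ⟨C, hC1, hC2⟩ := (t3.and (eventually_ge_atTop 1)).exists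
      exact ⟨C, hC2, hC1⟩
    obtain ⟨C₀, hC1, hC2⟩ := hC
    -- continuity of the real arctangent at `1`
    have t4 : Tendsto (fun η : ℝ => Real.arctan (1 / (1 + 2 * η))) (𝓝[>] 0) (𝓝 (Real.pi / 4)) := by
      have : ContinuousAt (fun η : ℝ => Real.arctan (1 / (1 + 2 * η))) 0 := by
        apply Real.continuous_arctan.continuousAt.comp
        apply ContinuousAt.div (by fun_prop) (by fun_prop) (by simp)
      have := this.tendsto.mono_left (nhdsWithin_le_nhds (s := Ioi 0))
      simpa [Real.arctan_one] using this
    have t5 := t4.eventually_const_lt (show Real.pi / 4 - ε / 2 < Real.pi / 4 by linarith)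
    obtain ⟨η, hη, hη0⟩ := (t5.and self_mem_nhdsWithin).exists
    have hη0' : 0 < η := hη0
    filter_upwards [hlim η hη0', eventually_gt_atTop 0, eventually_ge_atTop ((C₀ + 2) / η)] with A a1 a2 a3
    have hB := (h A a2).Bpos
    have b1 := (h A a2).dev_one_ge (half_pos hε) hC1 hC2
    have b2 : Real.arctan (1 / (1 + 2 * η)) ≤ Real.arctan (A / (B A + C₀ + 2)) := by
      apply Real.arctan_mono
      rw [div_le_div_iff₀ (by positivity) (by positivity)]
      rw [div_le_iff₀ hη0'] at a3
      linarith
    rw [Real.dist_0_eq_abs, abs_of_nonneg (hlow A a2)]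
    linarith
  rw [tendsto_iff_norm_sub_tendsto_zero]
  have := hone.mul_const (‖ξ + 1‖ ^ 2 / ξ.re)
  rw [zero_mul] at this
  refine squeeze_zero' (Eventually.of_forall fun _ => norm_nonneg _) ?_ this
  filter_upwards [eventually_gt_atTop 0] with A hA
  rw [norm_sub_rev]
  exact (h A hA).dev_sub_arctan_le h1 h2

/-! ### The contour identity -/

/-- The contribution `i ∫₀¹ G(1 + iy) dy - ∫₀¹ G(x + i) dx` of the right and top sides to the
contour integral of `G` around the unit square. -/
noncomputable def sides (G : ℂ → ℂ) : ℂ :=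
  Complex.I * (∫ y in (0 : ℝ)..1, G (1 + y * Complex.I)) - ∫ x in (0 : ℝ)..1, G (x + Complex.I)

/-- Cauchy's theorem on the unit square for a function that is real on the bottom side. -/
lemma sides_im {G : ℂ → ℂ} (hc : ContinuousOn G {z : ℂ | 0 ≤ z.re ∧ 0 ≤ z.im})
    (hd : DifferentiableOn ℂ G Q) (hr : ∀ x : ℝ, 0 ≤ x → x ≤ 1 → (G x).im = 0) :
    (sides G).im = ∫ y in (0 : ℝ)..1, (G (y * Complex.I)).re := by
  have key := Complex.integral_boundary_rect_eq_zero_of_continuousOn_of_differentiableOn G 0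
    (1 + Complex.I) (hc.mono ?_) (hd.mono ?_)
  · simp only [Complex.zero_re, Complex.zero_im, Complex.add_re, Complex.add_im, Complex.one_re,
      Complex.one_im, Complex.I_re, Complex.I_im, add_zero, zero_add, Complex.ofReal_zero, zero_mul,
      Complex.ofReal_one, one_mul, smul_eq_mul] at key
    have e : sides G = Complex.I * (∫ y in (0 : ℝ)..1, G (y * Complex.I))
        - ∫ x in (0 : ℝ)..1, G x := by
      unfold sides
      linear_combination key
    have i1 : IntervalIntegrable (fun y : ℝ => G (y * Complex.I)) MeasureTheory.volume 0 1 := by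
      apply ContinuousOn.intervalIntegrable
      rw [uIcc_of_le zero_le_one]
      refine hc.comp (by fun_prop) fun y hy => ?_
      simpa using hy.1
    have i2 : IntervalIntegrable (fun x : ℝ => G x) MeasureTheory.volume 0 1 := by
      apply ContinuousOn.intervalIntegrable
      rw [uIcc_of_le zero_le_one]
      refine hc.comp (by fun_prop) fun y hy => ?_
      simpa using hy.1
    have e2 : (∫ x in (0 : ℝ)..1, G x).im = 0 := by
      rw [← Complex.imCLM_apply, ← Complex.imCLM.intervalIntegral_comp_comm i2]
      refine intervalIntegral.integral_zero_ae (Eventually.of_forall fun x hx => ?_)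
      rw [uIoc_of_le zero_le_one] at hx
      exact hr x hx.1.le hx.2
    have e1 : (∫ y in (0 : ℝ)..1, G (y * Complex.I)).re
        = ∫ y in (0 : ℝ)..1, (G (y * Complex.I)).re := by
      rw [← Complex.reCLM_apply, ← Complex.reCLM.intervalIntegral_comp_comm i1]
      rfl
    rw [e, Complex.sub_im, e2, Complex.I_mul_im, e1, sub_zero]
  · intro z hz
    rw [Complex.mem_reProdIm] at hz
    simp at hz
    exact ⟨hz.1.1, hz.2.1⟩
  · intro z hz
    rw [Complex.mem_reProdIm] at hz
    simp at hz
    exact ⟨hz.1.1, hz.2.1⟩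

/-- The substitution `s ↦ √(s² - 1)`, inverse to `ξ ↦ √(ξ² + 1)` on the quadrant. -/
noncomputable def xi (s : ℂ) : ℂ := qsqrt (s ^ 2 - 1)

lemma xi_continuous : Continuous xi := by
  have := qsqrt_continuous
  unfold xi; fun_prop

lemma xi_arg_im (s : ℂ) : (s ^ 2 - 1).im = 2 * s.re * s.im := by
  simp [pow_two]; ring

lemma xi_sq {s : ℂ} (h1 : 0 ≤ s.re) (h2 : 0 ≤ s.im) : xi s ^ 2 = s ^ 2 - 1 :=
  qsqrt_sq (by rw [xi_arg_im]; positivity)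

lemma xi_mem {s : ℂ} (hs : s ∈ Q) : xi s ∈ Q :=
  qsqrt_mem_Q (by have := hs.1; have := hs.2; rw [xi_arg_im]; positivity)

lemma xi_differentiableAt {s : ℂ} (hs : s ∈ Q) : DifferentiableAt ℂ xi s := by
  have h : 0 < (s ^ 2 - 1).im := by
    have := hs.1; have := hs.2; rw [xi_arg_im]; positivity
  exact (qsqrt_differentiableAt h).comp (f := fun s : ℂ => s ^ 2 - 1) s (by fun_prop)

lemma qsqrt_xi {s : ℂ} (h1 : 0 ≤ s.re) (h2 : 0 ≤ s.im) : qsqrt (xi s ^ 2 + 1) = s := by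
  rw [xi_sq h1 h2, sub_add_cancel, qsqrt_of_sq h1 h2]

lemma xi_ofReal {x : ℝ} (h1 : 0 ≤ x) (h2 : x ≤ 1) : xi x = (√(1 - x ^ 2) : ℝ) * Complex.I := by
  have e : ((x : ℂ) ^ 2 - 1) = ((x ^ 2 - 1 : ℝ) : ℂ) := by push_cast; ring
  rw [xi, e, qsqrt_ofReal_neg (by nlinarith), neg_sub]

lemma xi_imag (y : ℝ) : xi (y * Complex.I) = (√(1 + y ^ 2) : ℝ) * Complex.I := by
  have e : ((y * Complex.I : ℂ) ^ 2 - 1) = ((-(1 + y ^ 2) : ℝ) : ℂ) := by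
    rw [mul_pow, Complex.I_sq]; push_cast; ring
  rw [xi, e, qsqrt_ofReal_neg (by nlinarith), neg_neg]

/-- The function whose contour integral around the unit square determines `B`. The factor
`1 - s⁴` vanishes at the corners `1` and `i`, where the bound on the deviation is singular. -/
noncomputable def contourFn (A : ℝ) (φ : ℂ → ℂ) (s : ℂ) : ℂ :=
  Complex.cos (φ (A * s)) * Complex.exp (Complex.I * A * xi s) * (1 - s ^ 4)

/-- The contribution of the left side of the square, up to the factor `cosh B`. -/
noncomputable def leftInt (A : ℝ) : ℝ :=
  ∫ y in (0 : ℝ)..1, Real.exp (-A * √(1 + y ^ 2)) * (1 - y ^ 4)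

namespace MapData
variable {A B : ℝ} {φ : ℂ → ℂ}

lemma contourFn_cont (h : MapData A B φ) :
    ContinuousOn (contourFn A φ) {z : ℂ | 0 ≤ z.re ∧ 0 ≤ z.im} := by
  have h1 : ContinuousOn (fun s : ℂ => φ (A * s)) {z : ℂ | 0 ≤ z.re ∧ 0 ≤ z.im} := by
    refine h.cont.comp (by fun_prop) fun s hs => ?_
    have := h.Apos
    have := hs.1; have := hs.2
    constructor <;> simp <;> positivity
  have := xi_continuous
  unfold contourFn
  exact ((Complex.continuous_cos.comp_continuousOn h1).mul (by fun_prop)).mul (by fun_prop)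

lemma contourFn_diff (h : MapData A B φ) : DifferentiableOn ℂ (contourFn A φ) Q := by
  have h1 : DifferentiableOn ℂ (fun s : ℂ => φ (A * s)) Q :=
    h.diff.comp (by fun_prop) fun s hs => mul_mem_Q h.Apos hs
  have h2 : DifferentiableOn ℂ xi Q := fun s hs => (xi_differentiableAt hs).differentiableWithinAt
  unfold contourFn
  exact (h1.ccos.mul (by fun_prop)).mul (by fun_prop)

lemma contourFn_real (h : MapData A B φ) {x : ℝ} (h1 : 0 ≤ x) (h2 : x ≤ 1) :
    (contourFn A φ x).im = 0 := by
  have hA := h.Apos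
  have hre : (φ (A * x : ℝ)).re = 0 := h.re_eq_zero (by positivity) (by nlinarith)
  have e : φ ((A : ℂ) * x) = ((φ (A * x : ℝ)).im : ℂ) * Complex.I := by
    rw [← Complex.ofReal_mul]
    exact Complex.ext (by rw [hre]; simp) (by simp)
  rw [contourFn, xi_ofReal h1 h2, e, Complex.cos_mul_I, ← Complex.ofReal_cosh,
    show Complex.I * A * ((√(1 - x ^ 2) : ℝ) * Complex.I) = ((-A * √(1 - x ^ 2) : ℝ) : ℂ) by
      push_cast; linear_combination (A : ℂ) * (√(1 - x ^ 2) : ℝ) * Complex.I_sq,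
    ← Complex.ofReal_exp, show (1 - (x : ℂ) ^ 4) = ((1 - x ^ 4 : ℝ) : ℂ) by push_cast; ring,
    ← Complex.ofReal_mul, ← Complex.ofReal_mul, Complex.ofReal_im]

lemma contourFn_imag (h : MapData A B φ) {y : ℝ} (h1 : 0 ≤ y) :
    (contourFn A φ (y * Complex.I)).re
      = Real.cosh B * (Real.exp (-A * √(1 + y ^ 2)) * (1 - y ^ 4)) := by
  have hA := h.Apos
  have hy : 0 ≤ A * y := by positivity
  have hc : (Complex.cos (φ ((A * y : ℝ) * Complex.I))).re = Real.cosh B := by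
    rw [← cos_gB h.Bpos (h.B_le_im hy), ← h.re_imag hy]
    conv_lhs => rw [← Complex.re_add_im (φ ((A * y : ℝ) * Complex.I)), Complex.cos_add_mul_I]
    simp [← Complex.ofReal_cos, ← Complex.ofReal_cosh, ← Complex.ofReal_sin, ← Complex.ofReal_sinh]
  rw [contourFn, xi_imag,
    show Complex.I * A * ((√(1 + y ^ 2) : ℝ) * Complex.I) = ((-A * √(1 + y ^ 2) : ℝ) : ℂ) by
      push_cast; linear_combination (A : ℂ) * (√(1 + y ^ 2) : ℝ) * Complex.I_sq,
    ← Complex.ofReal_exp,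
    show (1 - (y * Complex.I : ℂ) ^ 4) = ((1 - y ^ 4 : ℝ) : ℂ) by
      rw [mul_pow, Complex.I_pow_four]; push_cast; ring,
    mul_assoc, ← Complex.ofReal_mul, Complex.re_mul_ofReal, ← mul_assoc (A : ℂ), ← Complex.ofReal_mul,
    hc]

/-- Cauchy's theorem for `contourFn`: it is real on `[0, 1]`, and on `[0, i]` its real part carries
the factor `Re cos φ = cosh B` of the curved arc. -/
lemma contour_identity (h : MapData A B φ) :
    Real.cosh B * leftInt A = (sides (contourFn A φ)).im := by
  rw [sides_im h.contourFn_cont h.contourFn_diff fun x hx hx1 => h.contourFn_real hx hx1, leftInt,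
    ← intervalIntegral.integral_const_mul]
  refine intervalIntegral.integral_congr fun y hy => ?_
  rw [uIcc_of_le zero_le_one] at hy
  exact (h.contourFn_imag hy.1).symm

/-- Splitting the cosine into exponentials isolates the main term. -/
lemma contourFn_eq {s : ℂ} (h1 : 0 ≤ s.re) (h2 : 0 ≤ s.im) :
    contourFn A φ s = (Complex.exp (-Complex.I * dev A φ (xi s)) / 2
      + Complex.exp (Complex.I * (φ (A * s) + A * xi s)) / 2) * (1 - s ^ 4) := by
  have e : dev A φ (xi s) = φ (A * s) - A * xi s := by
    rw [dev, theta, qsqrt_xi h1 h2]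
  rw [contourFn, e, Complex.cos, mul_comm (_ / 2 : ℂ), ← mul_div_assoc, mul_add, ← Complex.exp_add,
    ← Complex.exp_add, add_comm (Complex.exp _), add_div]
  ring_nf

/-- The second exponential is exponentially small. -/
lemma small_exp_le (h : MapData A B φ) {s : ℂ} (hs : s ∈ Q) :
    ‖Complex.exp (Complex.I * (φ (A * s) + A * xi s))‖ ≤ Real.exp (-(A * (xi s).im)) := by
  have := (h.theta_mem (xi s)).1
  rw [theta, qsqrt_xi hs.1.le hs.2.le] at this
  rw [Complex.norm_exp]
  apply Real.exp_le_exp.2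
  simp
  linarith

lemma norm_one_sub_pow_le {s : ℂ} (hs : s ∈ Q)
    (hside : (s.re = 1 ∧ s.im ≤ 1) ∨ (s.im = 1 ∧ s.re ≤ 1)) :
    ‖1 - s ^ 4‖ ≤ 9 * (s.re * s.im) ∧ s.re * s.im ≤ 1 ∧ ‖s‖ ^ 2 ≤ 2 := by
  have p0 := hs.1
  have q0 := hs.2
  have hn : ‖s‖ ^ 2 ≤ 2 := by
    rw [Complex.sq_norm, Complex.normSq_apply]
    rcases hside with ⟨h1, h2⟩ | ⟨h1, h2⟩ <;> nlinarith
  have hn1 : ‖s‖ ≤ 2 := by nlinarith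
  have hs2 : ‖s ^ 2‖ ≤ 2 := by rwa [norm_pow]
  refine ⟨?_, ?_, hn⟩
  · rcases hside with ⟨h1, h2⟩ | ⟨h1, h2⟩
    · have e : 1 - s ^ 4 = -(s - 1) * ((1 + s) * (1 + s ^ 2)) := by ring
      have e1 : ‖-(s - 1)‖ = s.im := by
        have : s - 1 = (s.im : ℂ) * Complex.I := by apply Complex.ext <;> simp [h1]
        rw [norm_neg, this, norm_mul, Complex.norm_I, mul_one, Complex.norm_real,
          Real.norm_of_nonneg q0.le]
      have e2 : ‖1 + s‖ ≤ 3 := (norm_add_le _ _).trans (by rw [norm_one]; linarith)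
      have e3 : ‖1 + s ^ 2‖ ≤ 3 := (norm_add_le _ _).trans (by rw [norm_one]; linarith)
      rw [e, norm_mul, norm_mul, e1, h1]
      have : ‖1 + s‖ * ‖1 + s ^ 2‖ ≤ 3 * 3 := by gcongr
      nlinarith
    · have e : 1 - s ^ 4 = (s - Complex.I) * ((s + Complex.I) * (1 - s ^ 2)) := by
        linear_combination (1 - s ^ 2) * Complex.I_sq
      have e1 : ‖s - Complex.I‖ = s.re := by
        have : s - Complex.I = (s.re : ℂ) := by apply Complex.ext <;> simp [h1]
        rw [this, Complex.norm_real, Real.norm_of_nonneg p0.le]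
      have e2 : ‖s + Complex.I‖ ≤ 3 := (norm_add_le _ _).trans (by rw [Complex.norm_I]; linarith)
      have e3 : ‖1 - s ^ 2‖ ≤ 3 := (norm_sub_le _ _).trans (by rw [norm_one]; linarith)
      rw [e, norm_mul, norm_mul, e1, h1]
      have : ‖s + Complex.I‖ * ‖1 - s ^ 2‖ ≤ 3 * 3 := by gcongr
      nlinarith
  · rcases hside with ⟨h1, h2⟩ | ⟨h1, h2⟩ <;> nlinarith

/-- The integrand is bounded, uniformly in `A`, on the right and top sides: the factor `1 - s⁴`
compensates the singularity of the bound on `dev` at `1` and at `i`. -/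
lemma contourFn_bound (h : MapData A B φ) {s : ℂ} (hs : s ∈ Q)
    (hside : (s.re = 1 ∧ s.im ≤ 1) ∨ (s.im = 1 ∧ s.re ≤ 1)) : ‖contourFn A φ s‖ ≤ 100 := by
  obtain ⟨hb, hpq1, hn⟩ := norm_one_sub_pow_le hs hside
  have hpq : 0 < s.re * s.im := mul_pos hs.1 hs.2
  obtain ⟨hx, hy⟩ := xi_mem hs
  have hA := h.Apos
  have hsq := xi_sq hs.1.le hs.2.le
  have hxn : ‖xi s‖ ≤ 2 := by
    have : ‖xi s‖ ^ 2 ≤ 3 := by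
      rw [← norm_pow, hsq]
      refine (norm_sub_le _ _).trans ?_
      rw [norm_pow, norm_one]; linarith
    nlinarith [norm_nonneg (xi s)]
  have hxy : (xi s).re * (xi s).im = s.re * s.im := by
    have := congrArg Complex.im hsq
    rw [xi_arg_im] at this
    simp [pow_two] at this
    linarith
  have hre : s.re * s.im / 2 ≤ (xi s).re := by
    have := (Complex.abs_im_le_norm (xi s)).trans hxn
    have := (abs_le.1 this).2
    nlinarith
  have h1 : ‖Complex.exp (-Complex.I * dev A φ (xi s))‖ ≤ 18 / (s.re * s.im) := by
    rw [Complex.norm_exp, show (-Complex.I * dev A φ (xi s)).re = (dev A φ (xi s)).im by simp]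
    refine (h.exp_dev_im_le hx hy.le).trans ?_
    have h9 : ‖xi s + 1‖ ^ 2 ≤ 9 := by
      have : ‖xi s + 1‖ ≤ 3 := (norm_add_le _ _).trans (by rw [norm_one]; linarith)
      nlinarith [norm_nonneg (xi s + 1)]
    calc ‖xi s + 1‖ ^ 2 / (xi s).re ≤ 9 / (s.re * s.im / 2) := by gcongr
      _ = 18 / (s.re * s.im) := by field_simp; norm_num
  have h2 : ‖Complex.exp (Complex.I * (φ (A * s) + A * xi s))‖ ≤ 1 :=
    (h.small_exp_le hs).trans (Real.exp_le_one_iff.2 (by nlinarith))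
  rw [contourFn_eq hs.1.le hs.2.le, norm_mul]
  calc _ ≤ (18 / (s.re * s.im) / 2 + 1 / 2) * (9 * (s.re * s.im)) := by
        gcongr
        refine (norm_add_le _ _).trans ?_
        rw [norm_div, norm_div, Complex.norm_ofNat]
        gcongr
    _ = 81 + 9 / 2 * (s.re * s.im) := by
        generalize s.re * s.im = t at hpq
        field_simp
        ring
    _ ≤ 100 := by linarith

end MapData

/-! ### Laplace's method and the a priori bound -/

/-- The integrand of `leftInt` after the substitution `y = u / √A`. -/
noncomputable def laplaceFn (A u : ℝ) : ℝ :=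
  Real.exp (-(A * (√(1 + u ^ 2 / A) - 1))) * (1 - u ^ 4 / A ^ 2)

lemma leftInt_eq {A : ℝ} (hA : 0 < A) :
    √A * Real.exp A * leftInt A = ∫ u in (0 : ℝ)..√A, laplaceFn A u := by
  have key := intervalIntegral.smul_integral_comp_mul_left (a := 0) (b := 1) (laplaceFn A) (√A)
  rw [mul_zero, mul_one, smul_eq_mul] at key
  rw [← key, leftInt, mul_assoc, ← intervalIntegral.integral_const_mul]
  congr 1
  refine intervalIntegral.integral_congr fun y _ => ?_
  have h2 : √A ^ 2 = A := Real.sq_sqrt hA.le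
  have e1 : (√A * y) ^ 2 / A = y ^ 2 := by rw [mul_pow, h2]; field_simp
  have e2 : (√A * y) ^ 4 / A ^ 2 = y ^ 4 := by
    rw [mul_pow, show √A ^ 4 = (√A ^ 2) ^ 2 by ring, h2]; field_simp
  simp only [laplaceFn]
  rw [e1, e2, ← mul_assoc, ← Real.exp_add]
  congr 2
  ring

lemma laplace_exponent {A u : ℝ} (hA : 0 < A) :
    A * (√(1 + u ^ 2 / A) - 1) = u ^ 2 / (√(1 + u ^ 2 / A) + 1) := by
  have h0 : 0 ≤ u ^ 2 / A := by positivity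
  have h2 : √(1 + u ^ 2 / A) ^ 2 = 1 + u ^ 2 / A := Real.sq_sqrt (by linarith)
  have h3 : A * (u ^ 2 / A) = u ^ 2 := by field_simp
  rw [eq_div_iff (by positivity)]
  linear_combination A * h2 + h3

lemma laplaceFn_bound {A u : ℝ} (hA : 0 < A) (hu : 0 ≤ u) (hu1 : u ≤ √A) :
    |laplaceFn A u| ≤ Real.exp (-(1 / 3) * u ^ 2) := by
  have hsq : u ^ 2 ≤ A := by
    have := Real.sq_sqrt hA.le
    nlinarith
  have ht : u ^ 2 / A ≤ 1 := (div_le_one hA).2 hsq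
  have hs : √(1 + u ^ 2 / A) ≤ 2 := by
    rw [Real.sqrt_le_left (by norm_num)]; linarith
  have h4 : 0 ≤ 1 - u ^ 4 / A ^ 2 ∧ 1 - u ^ 4 / A ^ 2 ≤ 1 := by
    have e : u ^ 4 / A ^ 2 = (u ^ 2 / A) ^ 2 := by rw [div_pow]; ring
    have h0 : 0 ≤ u ^ 2 / A := by positivity
    rw [e]; constructor <;> nlinarith
  rw [laplaceFn, abs_mul, Real.abs_exp, abs_of_nonneg h4.1, laplace_exponent hA]
  refine (mul_le_of_le_one_right (Real.exp_pos _).le h4.2).trans ?_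
  apply Real.exp_le_exp.2
  have : u ^ 2 / 3 ≤ u ^ 2 / (√(1 + u ^ 2 / A) + 1) := by
    gcongr; linarith
  linarith

lemma laplaceFn_tendsto (u : ℝ) :
    Tendsto (fun A => laplaceFn A u) atTop (𝓝 (Real.exp (-(1 / 2) * u ^ 2))) := by
  have h1 : Tendsto (fun A : ℝ => u ^ 2 / A) atTop (𝓝 0) := tendsto_id.const_div_atTop _
  have h2 : Tendsto (fun A : ℝ => u ^ 4 / A ^ 2) atTop (𝓝 0) :=
    (tendsto_pow_atTop (by norm_num)).const_div_atTop _
  have h3 : Tendsto (fun A : ℝ => √(1 + u ^ 2 / A)) atTop (𝓝 1) := by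
    simpa using (h1.const_add 1).sqrt
  have h4 : Tendsto (fun A : ℝ => u ^ 2 / (√(1 + u ^ 2 / A) + 1)) atTop (𝓝 (u ^ 2 / (1 + 1))) :=
    (tendsto_const_nhds).div (h3.add_const 1) (by norm_num)
  have h5 := ((Real.continuous_exp.tendsto _).comp h4.neg).mul (h2.const_sub 1)
  have e : Real.exp (-(u ^ 2 / (1 + 1))) * (1 - 0) = Real.exp (-(1 / 2) * u ^ 2) := by
    rw [sub_zero, mul_one]; congr 1; ring
  rw [e] at h5
  refine h5.congr' ?_
  filter_upwards [eventually_gt_atTop 0] with A hA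
  rw [laplaceFn, laplace_exponent hA]
  rfl

/-- Laplace's method for `leftInt`. -/
lemma leftInt_tendsto :
    Tendsto (fun A => √A * Real.exp A * leftInt A) atTop (𝓝 √(Real.pi / 2)) := by
  have hHI : ∫ u in Ioi (0 : ℝ), Real.exp (-(1 / 2) * u ^ 2) = √(Real.pi / 2) := by
    rw [integral_gaussian_Ioi, div_eq_iff (by norm_num), show (2 : ℝ) = √4 by
      rw [show (4 : ℝ) = 2 ^ 2 by norm_num, Real.sqrt_sq (by norm_num)],
      ← Real.sqrt_mul (by positivity), ← show (2 : ℝ) = √4 by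
      rw [show (4 : ℝ) = 2 ^ 2 by norm_num, Real.sqrt_sq (by norm_num)]]
    congr 1; ring
  rw [← hHI]
  have main : Tendsto
      (fun A => ∫ u in Ioi (0 : ℝ), (Ioc 0 √A).indicator (laplaceFn A) u) atTop
      (𝓝 (∫ u in Ioi (0 : ℝ), Real.exp (-(1 / 2) * u ^ 2))) := by
    refine MeasureTheory.tendsto_integral_filter_of_dominated_convergence
      (fun u => Real.exp (-(1 / 3) * u ^ 2)) ?_ ?_ ?_ ?_
    · refine Eventually.of_forall fun A => ?_
      refine (Measurable.indicator ?_ measurableSet_Ioc).aestronglyMeasurable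
      unfold laplaceFn; fun_prop
    · filter_upwards [eventually_gt_atTop 0] with A hA
      refine Eventually.of_forall fun u => ?_
      by_cases hu : u ∈ Ioc 0 √A
      · rw [indicator_of_mem hu]
        exact laplaceFn_bound hA hu.1.le hu.2
      · rw [indicator_of_notMem hu, norm_zero]
        positivity
    · exact (integrable_exp_neg_mul_sq (by norm_num)).integrableOn
    · rw [MeasureTheory.ae_restrict_iff' measurableSet_Ioi]
      refine Eventually.of_forall fun u hu => ?_
      refine (laplaceFn_tendsto u).congr' ?_
      filter_upwards [Real.tendsto_sqrt_atTop.eventually_ge_atTop u] with A hA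
      rw [indicator_of_mem (show u ∈ Ioc 0 √A from ⟨hu, hA⟩)]
  refine main.congr' ?_
  filter_upwards [eventually_gt_atTop 0] with A hA
  rw [leftInt_eq hA, intervalIntegral.integral_of_le (Real.sqrt_nonneg _),
    MeasureTheory.setIntegral_indicator measurableSet_Ioc]
  congr 2
  ext u; simp +contextual

lemma one_lt_sqrt_half_pi : 1 < √(Real.pi / 2) := by
  rw [Real.lt_sqrt (by norm_num)]
  linarith [Real.pi_gt_three]

lemma right_side {y : ℝ} (h0 : 0 < y) (h1 : y ≤ 1) :
    (1 + y * Complex.I : ℂ) ∈ Q ∧ (((1 + y * Complex.I : ℂ).re = 1 ∧ (1 + y * Complex.I : ℂ).im ≤ 1)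
      ∨ ((1 + y * Complex.I : ℂ).im = 1 ∧ (1 + y * Complex.I : ℂ).re ≤ 1)) := by
  simp [Q, h0, h1]

lemma top_side {x : ℝ} (h0 : 0 < x) (h1 : x ≤ 1) :
    (x + Complex.I : ℂ) ∈ Q ∧ (((x + Complex.I : ℂ).re = 1 ∧ (x + Complex.I : ℂ).im ≤ 1)
      ∨ ((x + Complex.I : ℂ).im = 1 ∧ (x + Complex.I : ℂ).re ≤ 1)) := by
  simp [Q, h0, h1]

lemma MapData.sides_bound {A B : ℝ} {φ : ℂ → ℂ} (h : MapData A B φ) :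
    Real.cosh B * leftInt A ≤ 200 := by
  have h1 : ‖∫ y in (0 : ℝ)..1, contourFn A φ (1 + y * Complex.I)‖ ≤ 100 := by
    have := intervalIntegral.norm_integral_le_of_norm_le_const (a := 0) (b := 1) (C := 100)
      (f := fun y : ℝ => contourFn A φ (1 + y * Complex.I)) fun y hy => by
        rw [uIoc_of_le zero_le_one] at hy
        exact h.contourFn_bound (right_side hy.1 hy.2).1 (right_side hy.1 hy.2).2
    simpa using this
  have h2 : ‖∫ x in (0 : ℝ)..1, contourFn A φ (x + Complex.I)‖ ≤ 100 := by
    have := intervalIntegral.norm_integral_le_of_norm_le_const (a := 0) (b := 1) (C := 100)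
      (f := fun x : ℝ => contourFn A φ (x + Complex.I)) fun y hy => by
        rw [uIoc_of_le zero_le_one] at hy
        exact h.contourFn_bound (top_side hy.1 hy.2).1 (top_side hy.1 hy.2).2
    simpa using this
  rw [h.contour_identity]
  refine (Complex.im_le_norm _).trans ((norm_sub_le _ _).trans ?_)
  rw [norm_mul, Complex.norm_I, one_mul]
  linarith

/-- The a priori bound `B(A) ≤ (1 + o(1)) A`. -/
lemma B_le_eventually {B : ℝ → ℝ} {φ : ℝ → ℂ → ℂ} (h : ∀ A > (0 : ℝ), MapData A (B A) (φ A))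
    {η : ℝ} (hη : 0 < η) : ∀ᶠ A in atTop, B A ≤ (1 + η) * A := by
  have hlim : Tendsto (fun A : ℝ => η * A) atTop atTop := tendsto_id.const_mul_atTop hη
  have h1 := (Real.tendsto_pow_mul_exp_neg_atTop_nhds_zero 1).comp hlim
  have h2 : ∀ᶠ A : ℝ in atTop, (η * A) ^ 1 * Real.exp (-(η * A)) < η / 400 :=
    h1.eventually_lt_const (by positivity)
  filter_upwards [h2, leftInt_tendsto.eventually_const_lt one_lt_sqrt_half_pi,
    eventually_ge_atTop 1] with A hA1 hA2 hA3
  have hA : 0 < A := by linarith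
  have hb := (h A hA).sides_bound
  have hs : √A ≤ A := by
    rw [Real.sqrt_le_left hA.le]; nlinarith
  have hcosh : Real.cosh (B A) ≤ 200 * (A * Real.exp A) := by
    have hc := Real.cosh_pos (B A)
    have hE := Real.exp_pos A
    calc Real.cosh (B A) ≤ Real.cosh (B A) * (√A * Real.exp A * leftInt A) :=
          le_mul_of_one_le_right hc.le hA2.le
      _ = (Real.cosh (B A) * leftInt A) * (√A * Real.exp A) := by ring
      _ ≤ 200 * (A * Real.exp A) := by gcongr
  have hexp : Real.exp (B A) ≤ 2 * Real.cosh (B A) := by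
    rw [Real.cosh_eq]; linarith [Real.exp_pos (-B A)]
  have h400 : 400 * A ≤ Real.exp (η * A) := by
    rw [pow_one, Real.exp_neg, ← div_eq_mul_inv, div_lt_iff₀ (Real.exp_pos _)] at hA1
    have := Real.exp_pos (η * A)
    have h3 : η * (400 * A) ≤ η * Real.exp (η * A) := by linarith
    exact le_of_mul_le_mul_left h3 hη
  apply Real.exp_le_exp.1
  calc Real.exp (B A) ≤ 400 * A * Real.exp A := by linarith
    _ ≤ Real.exp (η * A) * Real.exp A := by gcongr
    _ = Real.exp ((1 + η) * A) := by rw [← Real.exp_add]; congr 1; ring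

/-! ### The limit of the contour identity -/

/-- The pointwise limit of `contourFn` as `A → ∞`. -/
noncomputable def limitFn (s : ℂ) : ℂ :=
  Complex.exp (-Complex.I * Complex.arctan (xi s)) / 2 * (1 - s ^ 4)

lemma contourFn_tendsto {B : ℝ → ℝ} {φ : ℝ → ℂ → ℂ} (h : ∀ A > (0 : ℝ), MapData A (B A) (φ A))
    {s : ℂ} (hs : s ∈ Q) :
    Tendsto (fun A => contourFn A (φ A) s) atTop (𝓝 (limitFn s)) := by
  have hx := xi_mem hs
  have h1 := tendsto_dev h (fun η hη => B_le_eventually h hη) hx.1 hx.2.le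
  have h2 : Tendsto (fun A => Complex.exp (-Complex.I * MapData.dev A (φ A) (xi s)) / 2) atTop
      (𝓝 (Complex.exp (-Complex.I * Complex.arctan (xi s)) / 2)) :=
    ((Complex.continuous_exp.tendsto _).comp (h1.const_mul (-Complex.I))).div_const 2
  have h3 : Tendsto (fun A : ℝ => Complex.exp (Complex.I * (φ A (A * s) + A * xi s)) / 2) atTop
      (𝓝 0) := by
    have h4 : Tendsto (fun A : ℝ => Real.exp (-(A * (xi s).im))) atTop (𝓝 0) :=
      Real.tendsto_exp_neg_atTop_nhds_zero.comp (tendsto_id.atTop_mul_const hx.2)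
    have h5 : Tendsto (fun A : ℝ => Complex.exp (Complex.I * (φ A (A * s) + A * xi s))) atTop
        (𝓝 0) := by
      refine squeeze_zero_norm' ?_ h4
      filter_upwards [eventually_gt_atTop 0] with A hA
      exact (h A hA).small_exp_le hs
    simpa using h5.div_const 2
  have h6 := (h2.add h3).mul_const (1 - s ^ 4)
  rw [add_zero] at h6
  refine h6.congr fun A => ?_
  rw [MapData.contourFn_eq hs.1.le hs.2.le]

lemma continuous_right_side : Continuous fun y : ℝ => (1 + y * Complex.I : ℂ) := by fun_prop

lemma continuous_top_side : Continuous fun x : ℝ => (x + Complex.I : ℂ) := by fun_prop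

lemma mapsTo_right_side : MapsTo (fun y : ℝ => (1 + y * Complex.I : ℂ)) (Icc 0 1)
    {z : ℂ | 0 ≤ z.re ∧ 0 ≤ z.im} := fun y hy => by simpa using hy.1

lemma mapsTo_top_side : MapsTo (fun x : ℝ => (x + Complex.I : ℂ)) (Icc 0 1)
    {z : ℂ | 0 ≤ z.re ∧ 0 ≤ z.im} := fun y hy => by simpa using hy.1

/-- Dominated convergence, with the uniform bound of `contourFn_bound`. -/
lemma sides_tendsto {B : ℝ → ℝ} {φ : ℝ → ℂ → ℂ} (h : ∀ A > (0 : ℝ), MapData A (B A) (φ A)) :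
    Tendsto (fun A => sides (contourFn A (φ A))) atTop (𝓝 (sides limitFn)) := by
  have aux : ∀ γ : ℝ → ℂ, Continuous γ →
      MapsTo γ (Icc 0 1) {z : ℂ | 0 ≤ z.re ∧ 0 ≤ z.im} →
      (∀ t : ℝ, 0 < t → t ≤ 1 → γ t ∈ Q ∧ (((γ t).re = 1 ∧ (γ t).im ≤ 1)
        ∨ ((γ t).im = 1 ∧ (γ t).re ≤ 1))) →
      Tendsto (fun A => ∫ t in (0 : ℝ)..1, contourFn A (φ A) (γ t)) atTop
        (𝓝 (∫ t in (0 : ℝ)..1, limitFn (γ t))) := by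
    intro γ hγ hm hside
    refine intervalIntegral.tendsto_integral_filter_of_dominated_convergence (fun _ => 100)
      ?_ ?_ ?_ ?_
    · filter_upwards [eventually_gt_atTop 0] with A hA
      rw [uIoc_of_le zero_le_one]
      refine ContinuousOn.aestronglyMeasurable ?_ measurableSet_Ioc
      exact (h A hA).contourFn_cont.comp hγ.continuousOn (hm.mono_left Ioc_subset_Icc_self)
    · filter_upwards [eventually_gt_atTop 0] with A hA
      refine Eventually.of_forall fun t ht => ?_
      rw [uIoc_of_le zero_le_one] at ht
      exact (h A hA).contourFn_bound (hside t ht.1 ht.2).1 (hside t ht.1 ht.2).2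
    · simp
    · refine Eventually.of_forall fun t ht => ?_
      rw [uIoc_of_le zero_le_one] at ht
      exact contourFn_tendsto h (hside t ht.1 ht.2).1
  exact ((aux _ continuous_right_side mapsTo_right_side fun t => right_side).const_mul
    Complex.I).sub (aux _ continuous_top_side mapsTo_top_side fun t => top_side)

/-- The part of `limitFn` that is regular at `0`. -/
noncomputable def regularFn (s : ℂ) : ℂ := s * (1 - s ^ 4) / (2 * (1 - Complex.I * xi s))

lemma one_sub_ne (s : ℂ) : (1 - Complex.I * xi s) ≠ 0 := fun h => by
  have := congrArg Complex.re h
  have h2 := qsqrt_im_nonneg (s ^ 2 - 1)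
  simp [xi] at this
  linarith

lemma regularFn_continuous : Continuous regularFn := by
  have := xi_continuous
  unfold regularFn
  refine Continuous.div (by fun_prop) (by fun_prop) fun s => ?_
  exact mul_ne_zero two_ne_zero (one_sub_ne s)

/-- The regular part does not contribute, since it is real on `[0, 1]` and imaginary on
`[0, i]`. -/
lemma sides_regularFn : (sides regularFn).im = 0 := by
  rw [sides_im regularFn_continuous.continuousOn]
  · refine intervalIntegral.integral_zero_ae (Eventually.of_forall fun y _ => ?_)
    rw [regularFn, xi_imag,
      show y * Complex.I * (1 - (y * Complex.I : ℂ) ^ 4)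
        / (2 * (1 - Complex.I * ((√(1 + y ^ 2) : ℝ) * Complex.I)))
        = ((y * (1 - y ^ 4) / (2 * (1 + √(1 + y ^ 2))) : ℝ) : ℂ) * Complex.I by
      rw [mul_pow, Complex.I_pow_four,
        show Complex.I * ((√(1 + y ^ 2) : ℝ) * Complex.I) = -((√(1 + y ^ 2) : ℝ) : ℂ) by
          linear_combination (√(1 + y ^ 2) : ℝ) * Complex.I_sq]
      push_cast; ring]
    simp only [Complex.re_ofReal_mul, Complex.I_re, mul_zero]
  · intro s hs
    have h1 : DifferentiableAt ℂ xi s := xi_differentiableAt hs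
    have h2 : DifferentiableAt ℂ (fun s => s * (1 - s ^ 4)) s := by fun_prop
    have h3 : DifferentiableAt ℂ (fun s => 2 * (1 - Complex.I * xi s)) s := by fun_prop
    exact (h2.div h3 (mul_ne_zero two_ne_zero (one_sub_ne s))).differentiableWithinAt
  · intro x h0 h1
    rw [regularFn, xi_ofReal h0 h1,
      show x * (1 - (x : ℂ) ^ 4)
        / (2 * (1 - Complex.I * ((√(1 - x ^ 2) : ℝ) * Complex.I)))
        = ((x * (1 - x ^ 4) / (2 * (1 + √(1 - x ^ 2))) : ℝ) : ℂ) by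
      rw [show Complex.I * ((√(1 - x ^ 2) : ℝ) * Complex.I) = -((√(1 - x ^ 2) : ℝ) : ℂ) by
          linear_combination (√(1 - x ^ 2) : ℝ) * Complex.I_sq]
      push_cast; ring]
    exact Complex.ofReal_im _

/-- By `exp_arctan`, `limitFn s = (1 - i ξ) (1 - s⁴) / (2 s)` with `ξ = √(s² - 1)`. The relations
`1 - i ξ = 2 - (1 + i ξ)` and `(1 - i ξ) (1 + i ξ) = s²` then split off the pole at `0`. -/
lemma limitFn_eq {s : ℂ} (hs : s ∈ Q) : limitFn s = (1 - s ^ 4) / s - regularFn s := by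
  have h0 : s ≠ 0 := fun h => by have := hs.1; rw [h] at this; simp at this
  have h1 := one_sub_ne s
  have h2 := xi_sq hs.1.le hs.2.le
  rw [limitFn, exp_arctan (xi_mem hs), qsqrt_xi hs.1.le hs.2.le, regularFn]
  field_simp
  linear_combination (1 - s ^ 4) * (Complex.I ^ 2 * h2 + (s ^ 2 - 1) * Complex.I_sq)

lemma hasDerivAt_primitive {s : ℂ} (hs : s ∈ Complex.slitPlane) :
    HasDerivAt (fun s => Complex.log s - s ^ 4 / 4) ((1 - s ^ 4) / s) s := by
  have h0 := Complex.slitPlane_ne_zero hs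
  have h := (Complex.hasDerivAt_log hs).sub ((hasDerivAt_pow 4 s).div_const 4)
  have e : s⁻¹ - (4 : ℕ) * s ^ (4 - 1) / 4 = (1 - s ^ 4) / s := by
    push_cast
    field_simp
  exact e ▸ h

lemma slit_right (y : ℝ) : (1 + y * Complex.I : ℂ) ∈ Complex.slitPlane := by
  left; simp

lemma slit_top (x : ℝ) : (x + Complex.I : ℂ) ∈ Complex.slitPlane := by
  right; simp

lemma kernel_continuous {γ : ℝ → ℂ} (hγ : Continuous γ) (hs : ∀ t, γ t ∈ Complex.slitPlane) :
    Continuous fun t => (1 - γ t ^ 4) / γ t :=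
  Continuous.div (by fun_prop) hγ fun t => Complex.slitPlane_ne_zero (hs t)

/-- The singular part contributes the difference of the primitive `log s - s⁴ / 4` between `i`
and `1`. -/
lemma sides_kernel : sides (fun s => (1 - s ^ 4) / s) = Complex.I * (Real.pi / 2 : ℝ) := by
  have h1 : ∫ y in (0 : ℝ)..1, Complex.I * ((1 - (1 + y * Complex.I) ^ 4) / (1 + y * Complex.I))
      = (Complex.log (1 + Complex.I) - (1 + Complex.I) ^ 4 / 4) - (0 - 1 / 4) := by
    have := intervalIntegral.integral_eq_sub_of_hasDerivAt (a := 0) (b := 1)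
      (f := fun y : ℝ => Complex.log (1 + y * Complex.I) - (1 + y * Complex.I) ^ 4 / 4)
      (f' := fun y : ℝ => Complex.I * ((1 - (1 + y * Complex.I) ^ 4) / (1 + y * Complex.I))) ?_ ?_
    · rw [this]; simp
    · intro y _
      have hg : HasDerivAt (fun y : ℝ => (1 + y * Complex.I : ℂ)) Complex.I y := by
        simpa using (((hasDerivAt_id y).ofReal_comp).mul_const Complex.I).const_add 1
      have := (hasDerivAt_primitive (slit_right y)).comp_of_eq y hg rfl
      rw [mul_comm] at this
      exact this
    · exact ((kernel_continuous continuous_right_side slit_right).const_mul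
        Complex.I).intervalIntegrable _ _
  have h2 : ∫ x in (0 : ℝ)..1, ((1 - (x + Complex.I) ^ 4) / (x + Complex.I))
      = (Complex.log (1 + Complex.I) - (1 + Complex.I) ^ 4 / 4)
        - (Complex.log Complex.I - 1 / 4) := by
    have := intervalIntegral.integral_eq_sub_of_hasDerivAt (a := 0) (b := 1)
      (f := fun x : ℝ => Complex.log (x + Complex.I) - (x + Complex.I) ^ 4 / 4)
      (f' := fun x : ℝ => ((1 - (x + Complex.I) ^ 4) / (x + Complex.I))) ?_ ?_
    · rw [this]; simp
    · intro x _
      have hg : HasDerivAt (fun x : ℝ => (x + Complex.I : ℂ)) 1 x := by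
        simpa using ((hasDerivAt_id x).ofReal_comp).add_const Complex.I
      have := (hasDerivAt_primitive (slit_top x)).comp_of_eq x hg rfl
      rw [mul_one] at this
      exact this
    · exact (kernel_continuous continuous_top_side slit_top).intervalIntegrable _ _
  rw [sides, ← intervalIntegral.integral_const_mul, h1, h2, Complex.log_I]
  push_cast; ring

/-- Only the singular part contributes, by a quarter turn of the logarithm. -/
lemma sides_limitFn : (sides limitFn).im = Real.pi / 2 := by
  have aux : ∀ γ : ℝ → ℂ, Continuous γ → (∀ t, γ t ∈ Complex.slitPlane) →
      (∀ t : ℝ, 0 < t → t ≤ 1 → γ t ∈ Q) →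
      ∫ t in (0 : ℝ)..1, limitFn (γ t) = (∫ t in (0 : ℝ)..1, (1 - γ t ^ 4) / γ t)
        - ∫ t in (0 : ℝ)..1, regularFn (γ t) := by
    intro γ hγ hs hQ
    have hR : Continuous fun t => regularFn (γ t) := regularFn_continuous.comp hγ
    rw [← intervalIntegral.integral_sub ((kernel_continuous hγ hs).intervalIntegrable _ _)
      (hR.intervalIntegrable _ _)]
    refine intervalIntegral.integral_congr_ae (Eventually.of_forall fun t ht => ?_)
    rw [uIoc_of_le zero_le_one] at ht
    exact limitFn_eq (hQ t ht.1 ht.2)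
  have e : sides limitFn = sides (fun s => (1 - s ^ 4) / s) - sides regularFn := by
    simp only [sides]
    rw [aux _ continuous_right_side slit_right fun t h0 h1 => (right_side h0 h1).1,
      aux _ continuous_top_side slit_top fun t h0 h1 => (top_side h0 h1).1]
    ring
  rw [e, Complex.sub_im, sides_regularFn, sides_kernel, Complex.I_mul_im, Complex.ofReal_re,
    sub_zero]

lemma cosh_leftInt_tendsto {B : ℝ → ℝ} {φ : ℝ → ℂ → ℂ}
    (h : ∀ A > (0 : ℝ), MapData A (B A) (φ A)) :
    Tendsto (fun A => Real.cosh (B A) * leftInt A) atTop (𝓝 (Real.pi / 2)) := by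
  rw [← sides_limitFn]
  refine ((Complex.continuous_im.tendsto _).comp (sides_tendsto h)).congr' ?_
  filter_upwards [eventually_gt_atTop 0] with A hA
  exact (h A hA).contour_identity.symm

lemma asymptotics_of_mapData {B : ℝ → ℝ} {φ : ℝ → ℂ → ℂ}
    (h : ∀ A > (0 : ℝ), MapData A (B A) (φ A)) :
    Tendsto (fun A : ℝ =>
        B A - (A + (1 / 2) * Real.log A + (1 / 2) * Real.log (2 * Real.pi)))
      atTop (𝓝 0) := by
  have hpi := Real.pi_pos
  have hD : Tendsto (fun A : ℝ => √A * Real.exp A) atTop atTop :=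
    Real.tendsto_sqrt_atTop.atTop_mul_atTop₀ Real.tendsto_exp_atTop
  have hne : √(Real.pi / 2) ≠ 0 := by positivity
  have h1 : Tendsto (fun A : ℝ => Real.cosh (B A) / (√A * Real.exp A)) atTop
      (𝓝 (Real.pi / 2 / √(Real.pi / 2))) := by
    refine ((cosh_leftInt_tendsto h).div leftInt_tendsto hne).congr' ?_
    filter_upwards [leftInt_tendsto.eventually_ne hne] with A hA
    have : leftInt A ≠ 0 := right_ne_zero_of_mul hA
    have h' := left_ne_zero_of_mul hA
    simp only [Pi.div_apply]
    rw [mul_div_mul_right _ _ this]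
  have h2 : Tendsto (fun A : ℝ => Real.exp (-B A) / (√A * Real.exp A)) atTop (𝓝 0) := by
    refine squeeze_zero' ?_ ?_ hD.inv_tendsto_atTop
    · exact Eventually.of_forall fun A => by positivity
    · filter_upwards [eventually_gt_atTop 0] with A hA
      have := (h A hA).Bpos
      have h3 : Real.exp (-B A) ≤ 1 := Real.exp_le_one_iff.2 (by linarith)
      rw [div_eq_mul_inv]
      exact mul_le_of_le_one_left (by positivity) h3
  have h3 : Tendsto (fun A : ℝ => Real.exp (B A) / (√A * Real.exp A)) atTop
      (𝓝 √(2 * Real.pi)) := by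
    have e : 2 * (Real.pi / 2 / √(Real.pi / 2)) - 0 = √(2 * Real.pi) := by
      rw [Real.div_sqrt, sub_zero]
      symm
      rw [Real.sqrt_eq_iff_mul_self_eq (by positivity) (by positivity)]
      have := Real.mul_self_sqrt (show 0 ≤ Real.pi / 2 by positivity)
      linear_combination (-4) * this
    rw [← e]
    refine ((h1.const_mul 2).sub h2).congr fun A => ?_
    rw [Real.cosh_eq]; ring
  have h4 := (h3.log (by positivity)).sub_const ((1 / 2) * Real.log (2 * Real.pi))
  rw [Real.log_sqrt (by positivity)] at h4
  have e0 : Real.log (2 * Real.pi) / 2 - 1 / 2 * Real.log (2 * Real.pi) = 0 := by ring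
  rw [e0] at h4
  refine h4.congr' ?_
  filter_upwards [eventually_gt_atTop 0] with A hA
  rw [Real.log_div (by positivity) (by positivity), Real.log_mul (by positivity) (by positivity),
    Real.log_exp, Real.log_exp, Real.log_sqrt hA.le]
  ring

/-- Asymptotics of `B(A)`: if for each `A > 0` the map `φ_A` is the normalized conformal
map of the first quadrant onto `Ω_{B(A)}` with `φ_A(0) = iB(A)` and `φ_A(A) = 0`, then
`B(A) = A + ½ log A + ½ log(2π) + o(1)` as `A → ∞`. -/
theorem B_asymptotics (B : ℝ → ℝ) (φ : ℝ → ℂ → ℂ)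
    (hB : ∀ A > (0 : ℝ), 0 < B A)
    (hcont : ∀ A > (0 : ℝ), ContinuousOn (φ A) (closure Q))
    (hmaps : ∀ A > (0 : ℝ), MapsTo (φ A) (closure Q) (closure (ΩB (B A))))
    (hholo : ∀ A > (0 : ℝ), DifferentiableOn ℂ (φ A) Q)
    (hbij : ∀ A > (0 : ℝ), BijOn (φ A) Q (ΩB (B A)))
    (hlim : ∀ A > (0 : ℝ), Tendsto (fun z => φ A z / z)
      (comap (fun z : ℂ => ‖z‖) atTop ⊓ principal Q) (nhds 1))
    (h0 : ∀ A > (0 : ℝ), φ A 0 = (B A : ℂ) * Complex.I)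
    (hA0 : ∀ A > (0 : ℝ), φ A A = 0) :
    Tendsto (fun A : ℝ =>
        B A - (A + (1 / 2) * Real.log A + (1 / 2) * Real.log (2 * Real.pi)))
      atTop (nhds 0) := by
  refine asymptotics_of_mapData (φ := φ) fun A hA => ?_
  exact MapData.mk' hA (hB A hA) (hcont A hA) (hmaps A hA) (hholo A hA) (hbij A hA) (hlim A hA)
    (h0 A hA) (hA0 A hA)
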